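/- arXiv:1810.00015 — 2 statements merged into one kernel-verified Lean document; each statement's English description precedes it below -/
import Mathlib

section
/- Let m ≥ 1 and q = 2^m. Every zero-fixing automorphism of the code M_q ⊆ F_q^{q+1} (the dual of the MDS code M_q^⊥) is semilinear, i.e., Aut0(M_q) = AutL_2(M_q) = AutS(M_q); moreover, Aut0(M_q) is isomorphic to a subgroup of the general semilinear group ΓL(2,q), so its order divides m·(q²−1)·(q²−q). -/
open Finset

/-- The dual of a code (as a set of words) with respect to the standard inner product. -/
def dualSet {F : Type*} [CommRing F] {ι : Type*} [Fintype ι] (C : Set (ι → F)) :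
    Set (ι → F) :=
  {y | ∀ x ∈ C, ∑ i, x i * y i = 0}

/-- Zero-fixing automorphisms of a code. -/
def aut0Set {F : Type*} [Zero F] {ι : Type*} (C : Set (ι → F)) :
    Set (Equiv.Perm (ι → F)) :=
  {e | (∃ (π : Equiv.Perm ι) (σ : ι → Equiv.Perm F), (∀ i, σ i 0 = 0) ∧
        ∀ v i, e v i = σ i (v (π⁻¹ i))) ∧ ⇑e '' C = C}

/-- `F₂`-linear automorphisms of a code over a field of characteristic 2. -/
def autL2Set {F : Type*} [Field F] {ι : Type*} (C : Set (ι → F)) :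
    Set (Equiv.Perm (ι → F)) :=
  {e | (∃ (π : Equiv.Perm ι) (σ : ι → Equiv.Perm F),
        (∀ i x y, σ i (x + y) = σ i x + σ i y) ∧
        ∀ v i, e v i = σ i (v (π⁻¹ i))) ∧ ⇑e '' C = C}

/-- Semilinear automorphisms of a code over a field `F`. -/
def autSSet {F : Type*} [Field F] {ι : Type*} (C : Set (ι → F)) :
    Set (Equiv.Perm (ι → F)) :=
  {e | (∃ (π : Equiv.Perm ι) (τ : F ≃+* F) (c : ι → F), (∀ i, c i ≠ 0) ∧
        ∀ v i, e v i = c i * τ (v (π⁻¹ i))) ∧ ⇑e '' C = C}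

/-- The general semilinear group `ΓL(K/F)` of a field extension `K` of `F`, viewed as the
set of those permutations of `K` that are additive and semilinear over `F`. -/
def gammaLSet (F K : Type*) [Field F] [Field K] [Algebra F K] :
    Set (Equiv.Perm K) :=
  {e | ∃ τ : F ≃+* F, (∀ x y : K, e (x + y) = e x + e y) ∧
        ∀ (a : F) (x : K), e (algebraMap F K a * x) = algebraMap F K (τ a) * e x}

/-!
Minimum-weight words of an MDS code determine the coordinate maps of an isometry: comparing the
image of a sum, or of a multiple, of such words with the sum or multiple of their images produces a
word of the code with too few nonzero coordinates. This makes the coordinate maps additive and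
shows that each of them carries multiplication by many units to multiplication by units. If those
are more than half of all units, they are all of them, since they form a group.

The code `M_q` is the set of `v` with `∑ v i = 0` and `∑ v i • ζ ^ i = 0`. The words satisfying
the second equation are exactly those in `M_q` or at distance at least three from `M_q`, so
automorphisms of `M_q` preserve the kernel of `v ↦ ∑ v i • ζ ^ i` and descend to semilinear
bijections of `K`. No nonzero word of weight at most two lies in this kernel, hence the descent
is faithful.
-/

section MinimumDistance

variable {F ι : Type*} [Field F] [DecidableEq F] [Fintype ι]

/-- The linear code `C` has minimum distance at least `d`. -/
def HasMinDist (C : Submodule F (ι → F)) (d : ℕ) : Prop :=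
  ∀ v ∈ C, hammingNorm v < d → v = 0

/-- `C` is a maximum distance separable code of minimum distance `d`. Only the inequality
`n + 1 ≤ dim C + d` is required, since the reverse one is the Singleton bound. -/
structure IsMDS (C : Submodule F (ι → F)) (d : ℕ) : Prop where
  hasMinDist : HasMinDist C d
  card_add_one_le : Fintype.card ι + 1 ≤ Module.finrank F C + d

variable {C D : Submodule F (ι → F)} {d : ℕ} {v w : ι → F} {s T : Finset ι} {i j k l : ι}

omit [Field F] in
theorem hammingNorm_le_card [Zero F] (h : ∀ i ∉ s, v i = 0) : hammingNorm v ≤ #s :=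
  card_le_card fun i hi => by_contra fun his => (mem_filter.1 hi).2 (h i his)

theorem HasMinDist.eq_zero (hD : HasMinDist D d) (hv : v ∈ D) (hs : #s < d)
    (h : ∀ i ∉ s, v i = 0) : v = 0 :=
  hD v hv ((hammingNorm_le_card h).trans_lt hs)

namespace IsMDS

theorem exists_ne_zero_of_card_eq (hC : IsMDS C d) (hs : #s = d) :
    ∃ v ∈ C, v ≠ 0 ∧ ∀ i ∉ s, v i = 0 := by
  classical
  let restrict : C →ₗ[F] ({i // i ∉ s} → F) := LinearMap.funLeft F F (↑) ∘ₗ C.subtype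
  have hlt : Module.finrank F ({i // i ∉ s} → F) < Module.finrank F C := by
    rw [Module.finrank_fintype_fun_eq_card, Fintype.card_subtype_compl, Fintype.card_coe, hs]
    have := hC.card_add_one_le
    have := hs ▸ card_le_univ s
    lia
  obtain ⟨v, hv, hv0⟩ := (Submodule.ne_bot_iff _).1 (LinearMap.ker_ne_bot_of_finrank_lt hlt)
  have hrestrict : restrict v = 0 := hv
  exact ⟨v, v.2, by simpa using hv0, fun i hi => congrFun hrestrict ⟨i, hi⟩⟩

theorem exists_ne_zero_iff_mem (hC : IsMDS C d) (hs : #s = d) :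
    ∃ v ∈ C, ∀ i, v i ≠ 0 ↔ i ∈ s := by
  obtain ⟨v, hv, hv0, hvs⟩ := hC.exists_ne_zero_of_card_eq hs
  have hsub : ({i | v i ≠ 0} : Finset ι) ⊆ s := fun i hi =>
    by_contra fun his => (mem_filter.1 hi).2 (hvs i his)
  have heq := eq_of_subset_of_card_le hsub
    (hs ▸ not_lt.1 fun h => hv0 (hC.hasMinDist v hv h))
  exact ⟨v, hv, fun i => by rw [← heq, mem_filter_univ]⟩

theorem exists_apply_eq_one (hC : IsMDS C d) (hs : #s = d) (hi : i ∈ s) :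
    ∃ v ∈ C, v i = 1 ∧ ∀ j, v j ≠ 0 ↔ j ∈ s := by
  obtain ⟨v, hv, hvs⟩ := hC.exists_ne_zero_iff_mem hs
  have hvi := (hvs i).2 hi
  exact ⟨(v i)⁻¹ • v, C.smul_mem _ hv, by simp [hvi], fun j => by simp [hvi, ← hvs j]⟩

end IsMDS

theorem HasMinDist.eq_of_support_eq_insert [DecidableEq ι] (hC : HasMinDist C d) (hv : v ∈ C)
    (hw : w ∈ C) (hT : #T < d) (hi : i ∈ T) (hj : j ∈ T) (hij : i ≠ j) (hk : k ∉ T)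
    (hvk : ∀ p, v p ≠ 0 ↔ p ∈ insert k T) (hwl : ∀ p, w p ≠ 0 ↔ p ∈ insert l T)
    (hvwi : v i = w i) (hvwj : v j = w j) : k = l := by
  have hcard : #(insert k (insert l ((T.erase i).erase j))) < d := by
    have := card_erase_add_one hi
    have := card_erase_add_one (mem_erase.2 ⟨hij.symm, hj⟩)
    have := card_insert_le k (insert l ((T.erase i).erase j))
    have := card_insert_le l ((T.erase i).erase j)
    lia
  have hvw : v - w = 0 := hC.eq_zero (C.sub_mem hv hw) hcard fun p hp => by
    rw [Pi.sub_apply, sub_eq_zero]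
    grind
  have hlk : k ∈ insert l T := by
    rw [← hwl, ← sub_eq_zero.1 hvw, hvk]
    exact mem_insert_self k T
  exact (mem_insert.1 hlk).resolve_right hk

end MinimumDistance

section CoordinatewiseMaps

variable {F ι : Type*} [Field F]

/-- The units `a` such that `σ` carries multiplication by `a` to multiplication by a unit. An
additive `σ` for which these are all units is a field automorphism followed by a scaling. -/
def multipliers (σ : Equiv.Perm F) : Subgroup Fˣ where
  carrier := {a | ∃ b : Fˣ, ∀ x, σ (a * x) = b * σ x}
  one_mem' := ⟨1, by simp⟩
  mul_mem' := by
    rintro a a' ⟨b, hb⟩ ⟨b', hb'⟩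
    exact ⟨b * b', fun x => by simp [mul_assoc, hb, hb']⟩
  inv_mem' := by
    rintro a ⟨b, hb⟩
    exact ⟨b⁻¹, fun x => by rw [Units.eq_inv_mul_iff_mul_eq, ← hb, Units.mul_inv_cancel_left]⟩

theorem subgroup_eq_top_of_card_lt_two_mul_card {G : Type*} [Group G] [Finite G] {H : Subgroup G}
    (h : Nat.card G < 2 * Nat.card H) : H = ⊤ := by
  by_contra hne
  have := Nat.mul_le_mul_left (Nat.card H) (H.one_lt_index_of_ne_top hne)
  rw [H.card_mul_index] at this
  lia

theorem exists_ringEquiv_of_multipliers_eq_top {σ : Equiv.Perm F}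
    (hadd : ∀ x y, σ (x + y) = σ x + σ y) (hmul : multipliers σ = ⊤) :
    ∃ τ : F ≃+* F, ∀ x, σ x = σ 1 * τ x := by
  have h0 : σ 0 = 0 := by simpa using hadd 0 0
  have h1 : σ 1 ≠ 0 := fun h => one_ne_zero (σ.injective (h.trans h0.symm))
  have hm (a x : F) : σ 1 * σ (a * x) = σ a * σ x := by
    obtain rfl | ha := eq_or_ne a 0
    · simp [h0]
    obtain ⟨b, hb⟩ : Units.mk0 a ha ∈ multipliers σ := hmul ▸ Subgroup.mem_top _
    have hb1 := hb 1
    simp only [Units.val_mk0, mul_one] at hb hb1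
    rw [hb, hb1]
    ring
  refine ⟨{ toEquiv := σ.trans (Equiv.mulLeft₀ (σ 1)⁻¹ (inv_ne_zero h1))
            map_mul' := fun x y => ?_
            map_add' := by simp [hadd, mul_add] }, fun x => (mul_inv_cancel_left₀ h1 _).symm⟩
  change (σ 1)⁻¹ * σ (x * y) = (σ 1)⁻¹ * σ x * ((σ 1)⁻¹ * σ y)
  field_simp
  linear_combination hm x y

variable [DecidableEq F] [Fintype ι] {C D : Submodule F (ι → F)} {d : ℕ} {v w : ι → F}
  {σ : ι → Equiv.Perm F} {i j : ι}

namespace HasMinDist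

theorem map_mul_apply_mul (hD : HasMinDist D d) (hσ : ∀ v ∈ C, (fun i => σ i (v i)) ∈ D)
    (h0 : ∀ i, σ i 0 = 0) (hv : v ∈ C) (hvd : hammingNorm v ≤ d) (hvi : v i ≠ 0) (a : F) (j : ι) :
    σ j (a * v j) * σ i (v i) = σ i (a * v i) * σ j (v j) := by
  classical
  have hcard : #(({p | v p ≠ 0} : Finset ι).erase i) < d :=
    (card_erase_lt_of_mem (by simpa using hvi)).trans_le hvd
  have hzero := hD.eq_zero
    (D.sub_mem (D.smul_mem (σ i (v i)) (hσ _ (C.smul_mem a hv)))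
      (D.smul_mem (σ i (a * v i)) (hσ v hv))) hcard fun p hp => by
        obtain rfl | hpi := eq_or_ne p i
        · simp [mul_comm]
        · have : v p = 0 := by simpa [hpi] using hp
          simp [this, h0]
  have := congrFun hzero j
  simp only [Pi.sub_apply, Pi.smul_apply, smul_eq_mul, Pi.zero_apply] at this
  linear_combination this

theorem mem_multipliers (hD : HasMinDist D d) (hσ : ∀ v ∈ C, (fun i => σ i (v i)) ∈ D)
    (h0 : ∀ i, σ i 0 = 0) (hv : v ∈ C) (hw : w ∈ C) (hvd : hammingNorm v ≤ d)
    (hwd : hammingNorm w ≤ d) (hvi : v i ≠ 0) (hvw : v i = w i) (hwj : w j ≠ 0) {a : Fˣ}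
    (ha : v j = a * w j) : a ∈ multipliers (σ j) := by
  have hne (p : ι) {x : F} (hx : x ≠ 0) : σ p x ≠ 0 := fun h =>
    hx ((σ p).injective (h.trans (h0 p).symm))
  have hvj : v j ≠ 0 := ha ▸ mul_ne_zero a.ne_zero hwj
  refine ⟨Units.mk0 _ (hne j hvj) / Units.mk0 _ (hne j hwj), fun x => ?_⟩
  have hv' := hD.map_mul_apply_mul hσ h0 hv hvd hvi (x / w j) j
  have hw' := hD.map_mul_apply_mul hσ h0 hw hwd (hvw ▸ hvi) (x / w j) j
  rw [← hvw, div_mul_cancel₀ _ hwj] at hw'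
  rw [show x / w j * v j = a * x by rw [ha]; field_simp] at hv'
  have hσi := hne i hvi
  have hσj := hne j hwj
  simp only [Units.val_div_eq_div_val, Units.val_mk0]
  field_simp
  refine mul_right_cancel₀ hσi ?_
  linear_combination σ j (w j) * hv' - σ j (v j) * hw'

end HasMinDist

namespace IsMDS

theorem map_add (hC : IsMDS C d) (hD : HasMinDist D d) (hσ : ∀ v ∈ C, (fun i => σ i (v i)) ∈ D)
    (h0 : ∀ i, σ i 0 = 0) (hd : 2 ≤ d) (hn : d < Fintype.card ι) (i : ι) (x y : F) :
    σ i (x + y) = σ i x + σ i y := by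
  classical
  obtain ⟨T, hiT, -, hT⟩ := exists_subsuperset_card_eq (n := d - 1) (subset_univ {i})
    (by simp only [card_singleton]; lia) (by rw [card_univ]; lia)
  rw [singleton_subset_iff] at hiT
  obtain ⟨a, -, ha⟩ : ∃ a ∈ univ, a ∉ T :=
    exists_mem_notMem_of_card_lt_card (by rw [card_univ]; lia)
  have haT : #(insert a T) = d := by rw [card_insert_of_notMem ha]; lia
  obtain ⟨b, -, hb⟩ : ∃ b ∈ univ, b ∉ insert a T :=
    exists_mem_notMem_of_card_lt_card (by rwa [card_univ, haT])
  have hbT : #(insert b T) = d := by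
    rw [card_insert_of_notMem fun h => hb (mem_insert_of_mem h)]
    lia
  obtain ⟨v, hv, hvi, hvT⟩ := hC.exists_apply_eq_one haT (mem_insert_of_mem hiT)
  obtain ⟨w, hw, hwi, hwT⟩ := hC.exists_apply_eq_one hbT (mem_insert_of_mem hiT)
  have hxv := C.smul_mem x hv
  have hyw := C.smul_mem y hw
  -- Outside `T` the supports of `v` and `w` are disjoint.
  have hzero := hD.eq_zero
    (D.sub_mem (D.sub_mem (hσ _ (C.add_mem hxv hyw)) (hσ _ hxv)) (hσ _ hyw))
    (s := T) (by lia) fun p hp => by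
      obtain hvp | hwp : v p = 0 ∨ w p = 0 := by grind
      · simp [hvp, h0]
      · simp [hwp, h0]
  have := congrFun hzero i
  simp only [Pi.sub_apply, Pi.add_apply, Pi.smul_apply, smul_eq_mul, hvi, hwi, mul_one,
    Pi.zero_apply] at this
  linear_combination this

theorem multipliers_eq_top [Fintype F] (hC : IsMDS C d) (hD : HasMinDist D d)
    (hσ : ∀ v ∈ C, (fun i => σ i (v i)) ∈ D) (h0 : ∀ i, σ i 0 = 0) (hd : 3 ≤ d)
    (hn : Fintype.card F + 2 * d ≤ 2 * (Fintype.card ι + 1)) (hij : i ≠ j) :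
    multipliers (σ j) = ⊤ := by
  classical
  have hdn : d ≤ Fintype.card ι := by
    have : 2 ≤ Fintype.card F := Fintype.one_lt_card
    lia
  obtain ⟨T, hijT, -, hT⟩ := exists_subsuperset_card_eq (n := d - 1) (subset_univ {i, j})
    (by rw [card_pair hij]; lia) (by rw [card_univ]; lia)
  have hi : i ∈ T := hijT (by simp)
  have hj : j ∈ T := hijT (by simp)
  have hkT {k : ι} (hk : k ∉ T) : #(insert k T) = d := by
    rw [card_insert_of_notMem hk]
    lia
  choose v hvC hvi hvT using fun k : {k // k ∉ T} =>
    hC.exists_apply_eq_one (hkT k.2) (mem_insert_of_mem hi)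
  have hvj k : v k j ≠ 0 := (hvT k j).2 (mem_insert_of_mem hj)
  have hvd k : hammingNorm (v k) ≤ d :=
    (hammingNorm_le_card fun p hp => by simpa using (hvT k p).not.2 hp).trans_eq (hkT k.2)
  obtain ⟨k₀, -, hk₀⟩ : ∃ k ∈ univ, k ∉ T :=
    exists_mem_notMem_of_card_lt_card (by rw [card_univ]; lia)
  let ratio (k : {k // k ∉ T}) : multipliers (σ j) :=
    ⟨Units.mk0 _ (hvj k) / Units.mk0 _ (hvj ⟨k₀, hk₀⟩),
      hD.mem_multipliers hσ h0 (hvC k) (hvC ⟨k₀, hk₀⟩) (hvd k) (hvd _) (by simp [hvi])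
        ((hvi k).trans (hvi _).symm) (hvj _) (by simp [hvj])⟩
  have hratio : Function.Injective ratio := fun k l hkl => Subtype.ext <|
    hC.hasMinDist.eq_of_support_eq_insert (hvC k) (hvC l) (by lia) hi hj hij k.2 (hvT k) (hvT l)
      ((hvi k).trans (hvi l).symm) (by simpa [ratio, Units.ext_iff, hvj] using hkl)
  have hle := Nat.card_le_card_of_injective ratio hratio
  rw [Nat.card_eq_fintype_card, Fintype.card_subtype_compl, Fintype.card_coe] at hle
  refine subgroup_eq_top_of_card_lt_two_mul_card ?_
  rw [Nat.card_units, Nat.card_eq_fintype_card (α := F)]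
  lia

theorem exists_ringEquiv [Fintype F] (hC : IsMDS C d) (hD : HasMinDist D d)
    (hσ : ∀ v ∈ C, (fun i => σ i (v i)) ∈ D) (h0 : ∀ i, σ i 0 = 0) (hd : 3 ≤ d)
    (hdn : d < Fintype.card ι) (hn : Fintype.card F + 2 * d ≤ 2 * (Fintype.card ι + 1)) :
    ∃ τ : F ≃+* F, ∀ i x, σ i x = σ i 1 * τ x := by
  classical
  have : Nontrivial ι := Fintype.one_lt_card_iff_nontrivial.1 (by lia)
  obtain ⟨i₀, j, hij₀⟩ := exists_pair_ne ι
  obtain ⟨τ, hτ⟩ := exists_ringEquiv_of_multipliers_eq_top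
    (hC.map_add hD hσ h0 (by lia) hdn j) (hC.multipliers_eq_top hD hσ h0 hd hn hij₀)
  refine ⟨τ, fun i x => ?_⟩
  obtain ⟨s, hij, -, hs⟩ := exists_subsuperset_card_eq (n := d) (subset_univ {i, j})
    (card_le_two.trans (by lia)) (by rw [card_univ]; lia)
  obtain ⟨v, hv, hvi, hvs⟩ := hC.exists_apply_eq_one hs (hij (mem_insert_self i {j}))
  have hvj : v j ≠ 0 := (hvs j).2 (hij (by simp))
  have hvd : hammingNorm v ≤ d :=
    (hammingNorm_le_card fun p hp => by simpa using (hvs p).not.2 hp).trans_eq hs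
  have h := hD.map_mul_apply_mul hσ h0 hv hvd (i := i) (by simp [hvi]) x j
  have hj1 : σ j 1 ≠ 0 := fun h => one_ne_zero ((σ j).injective (h.trans (h0 j).symm))
  rw [hvi, mul_one, hτ (x * v j), hτ (v j), map_mul] at h
  refine mul_right_cancel₀ (mul_ne_zero hj1 ((map_ne_zero τ).2 hvj)) ?_
  linear_combination -h

end IsMDS

end CoordinatewiseMaps

section CodeAutomorphisms

variable {F ι : Type*}

/-- The group of zero-fixing automorphisms of a code. -/
def aut0Subgroup [Zero F] (C : Set (ι → F)) : Subgroup (Equiv.Perm (ι → F)) where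
  carrier := aut0Set C
  one_mem' := ⟨⟨1, fun _ => 1, fun _ => rfl, fun _ _ => rfl⟩, by simp⟩
  mul_mem' := by
    rintro e e' ⟨⟨π, σ, h0, he⟩, hC⟩ ⟨⟨π', σ', h0', he'⟩, hC'⟩
    refine ⟨⟨π * π', fun i => σ i * σ' (π⁻¹ i), fun i => by simp [h0, h0'], fun v i => ?_⟩, ?_⟩
    · simp [he, he']
    · rw [Equiv.Perm.coe_mul, Set.image_comp, hC', hC]
  inv_mem' := by
    rintro e ⟨⟨π, σ, h0, he⟩, hC⟩
    refine ⟨⟨π⁻¹, fun i => (σ (π i))⁻¹, fun i => ?_, fun v i => ?_⟩, ?_⟩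
    · rw [Equiv.Perm.inv_eq_iff_eq, h0]
    · rw [Equiv.Perm.eq_inv_iff_eq]
      have := he (e⁻¹ v) (π i)
      simpa using this.symm
    · nth_rw 1 [← hC]
      simp [← Set.image_comp]

theorem hammingDist_apply_of_mem_aut0Set [Zero F] [DecidableEq F] [Fintype ι] {C : Set (ι → F)}
    {e : Equiv.Perm (ι → F)} (he : e ∈ aut0Set C) (v w : ι → F) :
    hammingDist (e v) (e w) = hammingDist v w := by
  obtain ⟨⟨π, σ, -, he⟩, -⟩ := he
  exact (card_equiv π fun i => by simp [he]).symm

variable [Field F] {C : Set (ι → F)} {e : Equiv.Perm (ι → F)}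

theorem autSSet_subset_autL2Set (C : Set (ι → F)) : autSSet C ⊆ autL2Set C := by
  rintro e ⟨⟨π, τ, c, hc, he⟩, hC⟩
  exact ⟨⟨π, fun i => τ.toEquiv.trans (Equiv.mulLeft₀ (c i) (hc i)), by simp [mul_add],
    by simpa using he⟩, hC⟩

theorem autL2Set_subset_aut0Set (C : Set (ι → F)) : autL2Set C ⊆ aut0Set C := by
  rintro e ⟨⟨π, σ, hadd, he⟩, hC⟩
  exact ⟨⟨π, σ, fun i => by simpa using hadd i 0 0, he⟩, hC⟩

theorem map_add_of_mem_autL2Set (he : e ∈ autL2Set C) (v w : ι → F) : e (v + w) = e v + e w := by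
  obtain ⟨⟨π, σ, hadd, he⟩, -⟩ := he
  ext i
  simp [he, hadd]

theorem exists_map_smul_of_mem_autSSet (he : e ∈ autSSet C) :
    ∃ τ : F ≃+* F, ∀ (a : F) (v : ι → F), e (a • v) = τ a • e v := by
  obtain ⟨⟨π, τ, c, -, he⟩, -⟩ := he
  refine ⟨τ, fun a v => ?_⟩
  ext i
  simp only [he, Pi.smul_apply, smul_eq_mul, map_mul]
  ring

theorem mem_autSSet_of_mem_aut0Set (he : e ∈ aut0Set C)
    (h : ∀ (π : Equiv.Perm ι) (σ : ι → Equiv.Perm F), (∀ i, σ i 0 = 0) →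
      (∀ v i, e v i = σ i (v (π⁻¹ i))) → ∃ τ : F ≃+* F, ∀ i x, σ i x = σ i 1 * τ x) :
    e ∈ autSSet C := by
  obtain ⟨⟨π, σ, h0, he⟩, hC⟩ := he
  obtain ⟨τ, hτ⟩ := h π σ h0 he
  exact ⟨⟨π, τ, fun i => σ i 1, fun i hi => one_ne_zero ((σ i).injective (hi.trans (h0 i).symm)),
    fun v i => by rw [he, hτ]⟩, hC⟩

theorem aut0Set_subset_autSSet_of_card_eq_two [Fintype F] (hF : Fintype.card F = 2)
    (C : Set (ι → F)) : aut0Set C ⊆ autSSet C := by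
  classical
  refine fun e he => mem_autSSet_of_mem_aut0Set he fun π σ h0 _ => ⟨RingEquiv.refl F, fun i x => ?_⟩
  have h01 (x : F) (hx : x ≠ 0) : x = 1 := by
    simpa [hF] using FiniteField.pow_card_sub_one_eq_one x hx
  obtain rfl | hx := eq_or_ne x 0
  · simp [h0]
  · simp [h01 x hx, h01 (σ i 1) fun h => one_ne_zero ((σ i).injective (h.trans (h0 i).symm))]

theorem HasMinDist.comap_funLeft [DecidableEq F] [Fintype ι] {C : Submodule F (ι → F)} {d : ℕ}
    (hC : HasMinDist C d) (π : Equiv.Perm ι) :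
    HasMinDist (C.comap (LinearMap.funLeft F F π)) d := fun v hv hvd => by
  have hnorm : hammingNorm (v ∘ π) = hammingNorm v := card_equiv π fun i => by simp
  have hvπ : v ∘ π = 0 := hC _ hv (hnorm.trans_lt hvd)
  exact π.surjective.injective_comp_right hvπ

theorem IsMDS.aut0Set_subset_autSSet [Fintype F] [DecidableEq F] [Fintype ι]
    {C : Submodule F (ι → F)} {d : ℕ} (hC : IsMDS C d) (hd : 3 ≤ d) (hdn : d < Fintype.card ι)
    (hn : Fintype.card F + 2 * d ≤ 2 * (Fintype.card ι + 1)) :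
    aut0Set (C : Set (ι → F)) ⊆ autSSet (C : Set (ι → F)) := by
  refine fun e he => mem_autSSet_of_mem_aut0Set he fun π σ h0 heσ => ?_
  have hσ v (hv : v ∈ C) :
      (fun i => σ (π i) (v i)) ∈ C.comap (LinearMap.funLeft F F (π⁻¹ : Equiv.Perm ι)) := by
    have hev : LinearMap.funLeft F F (π⁻¹ : Equiv.Perm ι) (fun i => σ (π i) (v i)) = e v := by
      ext i
      simp [heσ]
    rw [Submodule.mem_comap, hev, ← SetLike.mem_coe, ← he.2]
    exact Set.mem_image_of_mem e hv
  obtain ⟨τ, hτ⟩ :=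
    hC.exists_ringEquiv (hC.hasMinDist.comap_funLeft π⁻¹) hσ (fun i => h0 _) hd hdn hn
  exact ⟨τ, fun i x => by simpa using hτ (π⁻¹ i) x⟩

end CodeAutomorphisms

section Vandermonde

variable {R ι : Type*} [CommRing R] [Fintype ι] {z f : ι → R} {s : Finset ι} {d : ℕ}

theorem sum_mul_eval_eq_zero (h : ∀ k < d, ∑ i, z i * f i ^ k = 0) {p : Polynomial R}
    (hp : p.natDegree < d) : ∑ i, z i * p.eval (f i) = 0 := by
  simp only [Polynomial.eval_eq_sum_range, mul_sum]
  rw [sum_comm]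
  refine sum_eq_zero fun k hk => ?_
  simp only [mul_left_comm (z _), ← mul_sum]
  rw [h k (by rw [mem_range] at hk; lia), mul_zero]

theorem eq_zero_of_sum_mul_pow_eq_zero [IsDomain R] (hf : Function.Injective f) (hs : #s ≤ d)
    (hzs : ∀ i ∉ s, z i = 0) (h : ∀ k < d, ∑ i, z i * f i ^ k = 0) : z = 0 := by
  classical
  funext l
  by_contra hl
  have hls : l ∈ s := by_contra fun hls => hl (hzs l hls)
  have hpos := card_pos.2 ⟨l, hls⟩
  let p : Polynomial R := ∏ i ∈ s.erase l, (Polynomial.X - Polynomial.C (f i))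
  have hp : p.natDegree < d := by
    rw [Polynomial.natDegree_prod_of_monic _ _ fun i _ => Polynomial.monic_X_sub_C _]
    simp only [Polynomial.natDegree_X_sub_C, sum_const, smul_eq_mul, mul_one,
      card_erase_of_mem hls]
    lia
  have hroot i (hi : i ∈ s.erase l) : p.eval (f i) = 0 := by
    rw [Polynomial.eval_prod]
    exact prod_eq_zero hi (by simp)
  have hpl : p.eval (f l) ≠ 0 := by
    rw [Polynomial.eval_prod, prod_ne_zero_iff]
    intro i hi
    simpa [sub_eq_zero] using hf.ne (ne_of_mem_erase hi).symm
  have hsum := sum_mul_eval_eq_zero h hp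
  rw [sum_eq_single l (fun i _ hil => ?_) (by simp)] at hsum
  · exact mul_ne_zero hl hpl hsum
  · by_cases hi : i ∈ s
    · rw [hroot i (mem_erase.2 ⟨hil, hi⟩), mul_zero]
    · rw [hzs i hi, zero_mul]

end Vandermonde

section QuadraticExtension

open FiniteField (frobeniusAlgHom)

variable {F K : Type*} [Field F] [Field K] [Algebra F K]

theorem algebraMap_trace_eq_add [Fintype F] (h : Module.finrank F K = 2) (x : K) :
    algebraMap F K (Algebra.trace F K x) = x + frobeniusAlgHom F K x := by
  have : FiniteDimensional F K := Module.finite_of_finrank_eq_succ h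
  have : Finite K := Module.finite_of_finite F
  simp [FiniteField.algebraMap_trace_eq_sum_pow, h, sum_range_succ]

theorem algebraMap_norm_eq_mul [Fintype F] (h : Module.finrank F K = 2) (x : K) :
    algebraMap F K (Algebra.norm F x) = x * frobeniusAlgHom F K x := by
  have : FiniteDimensional F K := Module.finite_of_finrank_eq_succ h
  have : Finite K := Module.finite_of_finite F
  simp [FiniteField.algebraMap_norm_eq_prod_pow, h, prod_range_succ]

theorem norm_algebraMap_add_smul [Finite F] (h : Module.finrank F K = 2) (b c : F) (x : K) :
    Algebra.norm F (algebraMap F K b + c • x) =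
      b ^ 2 + b * c * Algebra.trace F K x + c ^ 2 * Algebra.norm F x := by
  have := Fintype.ofFinite F
  apply (algebraMap F K).injective
  simp only [map_add, map_mul, map_pow, algebraMap_norm_eq_mul h, algebraMap_trace_eq_add h,
    AlgHom.commutes, Algebra.smul_def]
  ring

theorem trace_ne_zero_of_norm_eq_one [Finite F] [CharP F 2] (h : Module.finrank F K = 2) {x : K}
    (hx : Algebra.norm F x = 1) (hx1 : x ≠ 1) : Algebra.trace F K x ≠ 0 := fun htr => by
  have := Fintype.ofFinite F
  have : CharP K 2 := charP_of_injective_algebraMap (algebraMap F K).injective 2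
  have hadd := algebraMap_trace_eq_add h x
  have hmul := algebraMap_norm_eq_mul h x
  rw [htr, map_zero, eq_comm, CharTwo.add_eq_zero] at hadd
  rw [hx, map_one, ← hadd, ← sq] at hmul
  exact hx1 (CharTwo.sq_injective (hmul.symm.trans (one_pow 2).symm))

end QuadraticExtension

/-- The family `u` enumerates without repetition the elements of norm one of a quadratic
extension of `F`. -/
structure IsUnitCircle (F : Type*) {K ι : Type*} [Field F] [Field K] [Algebra F K]
    (u : ι → K) : Prop where
  injective : Function.Injective u
  mem_range_iff (x : K) : x ∈ Set.range u ↔ Algebra.norm F x = 1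
  finrank_eq : Module.finrank F K = 2

namespace IsUnitCircle

open FiniteField (frobeniusAlgHom)

variable {F K ι : Type*} [Field F] [Field K] [Algebra F K] {u : ι → K}

theorem finiteDimensional (hu : IsUnitCircle F u) : FiniteDimensional F K :=
  Module.finite_of_finrank_eq_succ hu.finrank_eq

theorem norm_eq_one (hu : IsUnitCircle F u) (i : ι) : Algebra.norm F (u i) = 1 :=
  (hu.mem_range_iff _).1 ⟨i, rfl⟩

theorem ne_zero (hu : IsUnitCircle F u) (i : ι) : u i ≠ 0 := fun h => by
  have := hu.finiteDimensional
  simpa [h] using hu.norm_eq_one i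

theorem eq_zero_of_smul_inv_eq_zero (hu : IsUnitCircle F u) {v : ι → F}
    (hv : (fun i => v i • (u i)⁻¹) = 0) : v = 0 :=
  funext fun i => (smul_eq_zero.1 (congrFun hv i)).resolve_right (inv_ne_zero (hu.ne_zero i))

theorem nonempty (hu : IsUnitCircle F u) : Nonempty ι :=
  let ⟨i, _⟩ := (hu.mem_range_iff 1).2 (map_one _)
  ⟨i⟩

theorem exists_eq_smul_of_norm_eq_sq (hu : IsUnitCircle F u) {b : F} {β : K}
    (hβ : Algebra.norm F β = b ^ 2) : ∃ j, β = b • u j := by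
  have := hu.finiteDimensional
  obtain rfl | hb := eq_or_ne b 0
  · have := hu.nonempty
    simpa using hβ
  obtain ⟨j, hj⟩ := (hu.mem_range_iff (b⁻¹ • β)).2 <| by
    rw [Algebra.smul_def, map_mul, Algebra.norm_algebraMap, hu.finrank_eq, hβ]
    field_simp
  exact ⟨j, by rw [hj, smul_inv_smul₀ hb]⟩

theorem exists_eq_smul [Finite F] [CharP F 2] (hu : IsUnitCircle F u) (β : K) :
    ∃ (b : F) (j : ι), β = b • u j := by
  obtain ⟨b, hb⟩ := isSquare_of_charTwo' (Algebra.norm F β)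
  exact ⟨b, hu.exists_eq_smul_of_norm_eq_sq (hb.trans (sq b).symm)⟩

theorem frobenius_apply [Fintype F] (hu : IsUnitCircle F u) (i : ι) :
    frobeniusAlgHom F K (u i) = (u i)⁻¹ := by
  rw [← mul_right_inj' (hu.ne_zero i), mul_inv_cancel₀ (hu.ne_zero i),
    ← algebraMap_norm_eq_mul hu.finrank_eq, hu.norm_eq_one, map_one]

theorem card_eq [Fintype F] [Fintype ι] (hu : IsUnitCircle F u) :
    Fintype.card ι = Fintype.card F + 1 := by
  have := hu.finiteDimensional
  have : Finite K := Module.finite_of_finite F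
  let N : Kˣ →* Fˣ := Units.map (Algebra.norm F)
  have hker : Nat.card N.ker = Fintype.card ι := by
    let v (i : ι) : N.ker := ⟨Units.mk0 (u i) (hu.ne_zero i), Units.ext (hu.norm_eq_one i)⟩
    refine (Nat.card_eq_of_bijective v ⟨fun i j h => hu.injective ?_, fun x => ?_⟩).symm.trans
      Nat.card_eq_fintype_card
    · exact congrArg (fun x : N.ker => ((x : Kˣ) : K)) h
    · obtain ⟨i, hi⟩ := (hu.mem_range_iff (x : Kˣ)).2 (congrArg Units.val x.2)
      exact ⟨i, Subtype.ext (Units.ext hi)⟩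
  have hmul := N.ker.card_mul_index
  have hK : Nat.card K = Fintype.card F ^ 2 := by
    rw [Module.natCard_eq_pow_finrank (K := F), hu.finrank_eq, Nat.card_eq_fintype_card]
  have hF : 1 < Fintype.card F := Fintype.one_lt_card
  rw [Subgroup.index_ker, MonoidHom.range_eq_top.2 (FiniteField.unitsMap_norm_surjective F K),
    Subgroup.card_top, Nat.card_units, Nat.card_units, hK, hker, Nat.card_eq_fintype_card,
    ← one_pow 2, Nat.sq_sub_sq] at hmul
  exact Nat.eq_of_mul_eq_mul_right (by lia) hmul

theorem exists_smul_add_smul_eq [Finite F] [CharP F 2] (hu : IsUnitCircle F u) (s : F) {β : K}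
    (hβ : β ≠ 0) : ∃ (a c : F) (k l : ι), a + c = s ∧ a • u k + c • u l = β := by
  have := hu.finiteDimensional
  have : Finite K := Module.finite_of_finite F
  have := Fintype.ofFinite F
  have := @Fintype.ofFinite ι (Finite.of_injective u hu.injective)
  obtain ⟨b, j, rfl⟩ := hu.exists_eq_smul β
  have hb : b ≠ 0 := (smul_ne_zero_iff.1 hβ).1
  have : Nontrivial ι := Fintype.one_lt_card_iff_nontrivial.1 <| by
    rw [hu.card_eq]
    exact Nat.lt_add_of_pos_left Fintype.card_pos
  obtain ⟨k, hkj⟩ := exists_ne j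
  obtain ⟨x, hx⟩ : ∃ x, u k = x * u j := ⟨u k / u j, (div_mul_cancel₀ _ (hu.ne_zero j)).symm⟩
  have hx1 : x ≠ 1 := by
    rintro rfl
    exact hkj (hu.injective (hx.trans (one_mul _)))
  have hnorm : Algebra.norm F x = 1 := by
    rw [← hu.norm_eq_one k, hx, map_mul, hu.norm_eq_one, mul_one]
  have ht := trace_ne_zero_of_norm_eq_one hu.finrank_eq hnorm hx1
  -- The choice of `c` makes `s + c` the square root of the norm of `b + c • x`.
  let c := (b + s) ^ 2 / (b * Algebra.trace F K x)
  have hc : Algebra.norm F (algebraMap F K b + c • x) = (s + c) ^ 2 := by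
    rw [norm_algebraMap_add_smul hu.finrank_eq, hnorm]
    have : b * c * Algebra.trace F K x = (b + s) ^ 2 := by simp only [c]; field_simp
    rw [this, CharTwo.add_sq, CharTwo.add_sq, mul_one, CharTwo.add_cancel_left]
  obtain ⟨l, hl⟩ := hu.exists_eq_smul_of_norm_eq_sq (β := b • u j + c • u k) <| by
    rw [← hc, hx, ← smul_mul_assoc, Algebra.smul_def b, ← add_mul, map_mul, hu.norm_eq_one,
      mul_one]
  have : CharP K 2 := charP_of_injective_algebraMap (algebraMap F K).injective 2
  exact ⟨c, s + c, k, l, by rw [add_left_comm, CharTwo.add_self_eq_zero, add_zero],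
    by rw [← hl, add_left_comm, CharTwo.add_self_eq_zero, add_zero]⟩

theorem linearCombination_surjective [Finite F] [CharP F 2] [Fintype ι] (hu : IsUnitCircle F u) :
    Function.Surjective (Fintype.linearCombination F u) := fun β => by
  classical
  obtain ⟨b, j, rfl⟩ := hu.exists_eq_smul β
  exact ⟨Pi.single j b, Fintype.linearCombination_apply_single F u j b⟩

end IsUnitCircle

section CheckCode

variable {F K ι : Type*} [Field F] [Field K] [Algebra F K] [Fintype ι] {u : ι → K}

/-- The code with parity checks `1` and `u`; it is `M_q` when `u` lists the powers of `ζ`. -/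
def checkCode (F : Type*) {K ι : Type*} [Field F] [Field K] [Algebra F K] [Fintype ι]
    (u : ι → K) : Submodule F (ι → F) :=
  LinearMap.ker (Fintype.linearCombination F fun i => ((1 : F), u i))

theorem mem_checkCode {v : ι → F} :
    v ∈ checkCode F u ↔ ∑ i, v i = 0 ∧ Fintype.linearCombination F u v = 0 := by
  simp [checkCode, Fintype.linearCombination_apply, Prod.ext_iff, Prod.fst_sum, Prod.snd_sum]

theorem dualSet_add_trace_eq_checkCode [FiniteDimensional F K] [Algebra.IsSeparable F K] :
    dualSet {w | ∃ (c : F) (δ : K), ∀ i, w i = c + Algebra.trace F K (δ * u i)} =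
      (checkCode F u : Set (ι → F)) := by
  have hsum (v w : ι → F) (c : F) (δ : K) (hw : ∀ i, w i = c + Algebra.trace F K (δ * u i)) :
      ∑ i, w i * v i =
        c * ∑ i, v i + Algebra.trace F K (δ * Fintype.linearCombination F u v) := by
    simp only [hw, Fintype.linearCombination_apply, add_mul, sum_add_distrib, mul_sum, map_sum,
      mul_smul_comm, map_smul, smul_eq_mul, mul_comm (v _)]
  ext v
  rw [SetLike.mem_coe, mem_checkCode]
  constructor
  · intro h
    have hcδ c δ := (hsum v _ c δ fun _ => rfl).symm.trans (h _ ⟨c, δ, fun _ => rfl⟩)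
    refine ⟨by simpa using hcδ 1 0, (traceForm_nondegenerate F K).2 _ fun δ => ?_⟩
    simpa using hcδ 0 δ
  · rintro ⟨h₁, h₂⟩ w ⟨c, δ, hw⟩
    rw [hsum v w c δ hw, h₁, h₂, mul_zero, mul_zero, map_zero, add_zero]

namespace IsUnitCircle

open FiniteField (frobeniusAlgHom)

theorem sum_smul_inv_eq_zero [Finite F] (hu : IsUnitCircle F u) {v : ι → F}
    (hv : Fintype.linearCombination F u v = 0) : ∑ i, v i • (u i)⁻¹ = 0 := by
  have := Fintype.ofFinite F
  simpa [Fintype.linearCombination_apply, hu.frobenius_apply] using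
    congrArg (frobeniusAlgHom F K) hv

variable [Finite F] [DecidableEq F]

theorem hasMinDist_checkCode (hu : IsUnitCircle F u) : HasMinDist (checkCode F u) 4 := by
  intro v hv hv4
  obtain ⟨h1, h2⟩ := mem_checkCode.1 hv
  refine hu.eq_zero_of_smul_inv_eq_zero <| eq_zero_of_sum_mul_pow_eq_zero (d := 3) hu.injective
    (Nat.lt_succ_iff.1 hv4) (fun i hi => by simp_all) fun k hk => ?_
  interval_cases k
  · simpa using hu.sum_smul_inv_eq_zero h2
  · simp [hu.ne_zero, ← Algebra.algebraMap_eq_smul_one, ← map_sum, h1]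
  · simpa [sq, hu.ne_zero, Fintype.linearCombination_apply] using h2

theorem hasMinDist_ker [CharP F 2] (hu : IsUnitCircle F u) :
    HasMinDist (LinearMap.ker (Fintype.linearCombination F u)) 3 := by
  intro v hv hv3
  have : CharP K 2 := charP_of_injective_algebraMap (algebraMap F K).injective 2
  refine hu.eq_zero_of_smul_inv_eq_zero <| eq_zero_of_sum_mul_pow_eq_zero (d := 2)
    (CharTwo.sq_injective.comp hu.injective) (Nat.lt_succ_iff.1 hv3) (fun i hi => by simp_all)
    fun k hk => ?_
  interval_cases k
  · simpa using hu.sum_smul_inv_eq_zero hv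
  · simpa [sq, hu.ne_zero, Fintype.linearCombination_apply] using hv

theorem isMDS_checkCode (hu : IsUnitCircle F u) : IsMDS (checkCode F u) 4 where
  hasMinDist := hu.hasMinDist_checkCode
  card_add_one_le := by
    have := hu.finiteDimensional
    let H := Fintype.linearCombination F fun i => ((1 : F), u i)
    have hrange : Module.finrank F (LinearMap.range H) ≤ 3 :=
      (Submodule.finrank_le _).trans_eq <| by
        rw [Module.finrank_prod, Module.finrank_self, hu.finrank_eq]
    have hker : Module.finrank F (LinearMap.range H) + Module.finrank F (checkCode F u) = _ :=
      H.finrank_range_add_finrank_ker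
    rw [Module.finrank_fintype_fun_eq_card] at hker
    lia

variable [CharP F 2]

theorem linearCombination_eq_zero_iff (hu : IsUnitCircle F u) (v : ι → F) :
    Fintype.linearCombination F u v = 0 ↔
      v ∈ checkCode F u ∨ ∀ w ∈ checkCode F u, 3 ≤ hammingDist v w := by
  classical
  constructor
  · intro hv
    refine or_iff_not_imp_left.2 fun hvC w hw => not_lt.1 fun hlt => hvC ?_
    have hvw : -v + w = 0 := hu.hasMinDist_ker _
      (add_mem (neg_mem hv) (mem_checkCode.1 hw).2)
      ((hammingDist_eq_hammingNorm v w).symm.trans_lt hlt)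
    rwa [neg_add_eq_zero.1 hvw]
  · rintro (hv | hv)
    · exact (mem_checkCode.1 hv).2
    by_contra h0
    obtain ⟨a, c, k, l, hac, hkl⟩ := hu.exists_smul_add_smul_eq (∑ i, v i) h0
    let e : ι → F := Pi.single k a + Pi.single l c
    have he : hammingNorm e ≤ 2 :=
      (hammingNorm_le_card (s := {k, l}) fun i hi => by simp_all [e]).trans card_le_two
    have hsum : ∑ i, e i = ∑ i, v i := by simp [e, sum_add_distrib, hac]
    have hcomb : Fintype.linearCombination F u e = Fintype.linearCombination F u v := by
      simp [e, Fintype.linearCombination_apply_single, hkl]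
    have hve : v - e ∈ checkCode F u := by simp [mem_checkCode, hsum, hcomb]
    have hdist := hv _ hve
    rw [hammingDist_comm, hammingDist_eq_hammingNorm, neg_sub, sub_add_cancel] at hdist
    lia

end IsUnitCircle

end CheckCode

section InducedMap

theorem exists_perm_semiconj {α β : Type*} {f : α → β} (hf : Function.Surjective f)
    {e : Equiv.Perm α} (h : ∀ a b, f (e a) = f (e b) ↔ f a = f b) :
    ∃ g : Equiv.Perm β, Function.Semiconj f e g := by
  let r := Function.surjInv hf
  have hr b : f (r b) = b := Function.surjInv_eq hf b
  have hg a : f (e (r (f a))) = f (e a) := (h _ _).2 (hr (f a))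
  refine ⟨Equiv.ofBijective (fun b => f (e (r b))) ⟨fun b b' hb => ?_, fun b => ?_⟩,
    fun a => (hg a).symm⟩
  · rw [← hr b, ← hr b', ← h]
    exact hb
  · obtain ⟨a, rfl⟩ := hf b
    exact ⟨f (e.symm a), (hg _).trans (congrArg f (e.apply_symm_apply a))⟩

theorem semiconj_right_unique {α β : Type*} {f : α → β} (hf : Function.Surjective f)
    {e : α → α} {g g' : Equiv.Perm β} (hg : Function.Semiconj f e g)
    (hg' : Function.Semiconj f e g') : g = g' := by
  ext b
  obtain ⟨a, rfl⟩ := hf b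
  rw [← hg a, ← hg' a]

namespace IsUnitCircle

variable {F K ι : Type*} [Field F] [Finite F] [CharP F 2] [Field K] [Algebra F K] [Fintype ι]
  {u : ι → K} {e e' : Equiv.Perm (ι → F)} {g : Equiv.Perm K}

theorem linearCombination_apply_eq_zero_iff (hu : IsUnitCircle F u)
    (he : e ∈ aut0Set (checkCode F u : Set (ι → F))) (v : ι → F) :
    Fintype.linearCombination F u (e v) = 0 ↔ Fintype.linearCombination F u v = 0 := by
  classical
  have hC (w : ι → F) : e w ∈ checkCode F u ↔ w ∈ checkCode F u := by
    rw [← SetLike.mem_coe, ← he.2, e.injective.mem_set_image, SetLike.mem_coe]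
  rw [hu.linearCombination_eq_zero_iff, hu.linearCombination_eq_zero_iff, hC, e.surjective.forall]
  simp only [hC, hammingDist_apply_of_mem_aut0Set he]

theorem exists_semiconj (hu : IsUnitCircle F u)
    (he : e ∈ autL2Set (checkCode F u : Set (ι → F))) :
    ∃ g : Equiv.Perm K, Function.Semiconj (Fintype.linearCombination F u) e g := by
  refine exists_perm_semiconj hu.linearCombination_surjective fun v w => ?_
  have hsub : e v - e w = e (v - w) := by
    rw [sub_eq_iff_eq_add, ← map_add_of_mem_autL2Set he, sub_add_cancel]
  rw [← sub_eq_zero, ← map_sub, hsub,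
    hu.linearCombination_apply_eq_zero_iff (autL2Set_subset_aut0Set _ he), map_sub, sub_eq_zero]

theorem mem_gammaLSet_of_semiconj (hu : IsUnitCircle F u)
    (he : e ∈ autSSet (checkCode F u : Set (ι → F)))
    (hg : Function.Semiconj (Fintype.linearCombination F u) e g) : g ∈ gammaLSet F K := by
  obtain ⟨τ, hτ⟩ := exists_map_smul_of_mem_autSSet he
  refine ⟨τ, fun x y => ?_, fun a x => ?_⟩
  · obtain ⟨v, rfl⟩ := hu.linearCombination_surjective x
    obtain ⟨w, rfl⟩ := hu.linearCombination_surjective y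
    rw [← map_add, ← hg, ← hg, ← hg, map_add_of_mem_autL2Set (autSSet_subset_autL2Set _ he),
      map_add]
  · obtain ⟨v, rfl⟩ := hu.linearCombination_surjective x
    rw [← Algebra.smul_def, ← Algebra.smul_def, ← map_smul, ← hg, ← hg, hτ, map_smul]

-- The images of a word of weight one differ by a word of weight at most two.
theorem eq_of_semiconj (hu : IsUnitCircle F u)
    (he : e ∈ autL2Set (checkCode F u : Set (ι → F)))
    (he' : e' ∈ autL2Set (checkCode F u : Set (ι → F)))
    (hg : Function.Semiconj (Fintype.linearCombination F u) e g)
    (hg' : Function.Semiconj (Fintype.linearCombination F u) e' g) : e = e' := by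
  classical
  have hsingle j (x : F) : e (Pi.single j x) = e' (Pi.single j x) := by
    obtain ⟨⟨π, σ, hadd, hπ⟩, -⟩ := he
    obtain ⟨⟨π', σ', hadd', hπ'⟩, -⟩ := he'
    have h0 i : σ i 0 = 0 := by simpa using hadd i 0 0
    have h0' i : σ' i 0 = 0 := by simpa using hadd' i 0 0
    refine sub_eq_zero.1 <| hu.hasMinDist_ker.eq_zero (s := {π j, π' j}) ?_
      (Nat.lt_succ_of_le card_le_two) fun i hi => ?_
    · rw [LinearMap.mem_ker, map_sub, hg, hg', sub_self]
    · simp only [mem_insert, mem_singleton, not_or, ← Equiv.Perm.inv_eq_iff_eq] at hi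
      simp_all
  let f : (ι → F) →+ (ι → F) := AddMonoidHom.mk' e (map_add_of_mem_autL2Set he)
  let f' : (ι → F) →+ (ι → F) := AddMonoidHom.mk' e' (map_add_of_mem_autL2Set he')
  have hff' : f = f' := AddMonoidHom.functions_ext _ _ _ hsingle
  exact Equiv.ext fun v => DFunLike.congr_fun hff' v

end IsUnitCircle

end InducedMap

section GeneralSemilinearGroup

variable (F K : Type*) [Field F] [Field K] [Algebra F K]

/-- The general semilinear group as a group of permutations. -/
def gammaLSubgroup : Subgroup (Equiv.Perm K) where
  carrier := gammaLSet F K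
  one_mem' := ⟨RingEquiv.refl F, by simp, by simp⟩
  mul_mem' := by
    rintro e e' ⟨τ, hadd, hsmul⟩ ⟨τ', hadd', hsmul'⟩
    exact ⟨τ'.trans τ, by simp [hadd, hadd'], by simp [hsmul, hsmul']⟩
  inv_mem' := by
    rintro e ⟨τ, hadd, hsmul⟩
    refine ⟨τ.symm, fun x y => ?_, fun a x => ?_⟩
    · rw [Equiv.Perm.inv_eq_iff_eq, hadd]
      simp
    · rw [Equiv.Perm.inv_eq_iff_eq, hsmul]
      simp

variable {F K}

theorem apply_ne_zero_of_mem_gammaLSet {e : Equiv.Perm K} (he : e ∈ gammaLSet F K) {x : K}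
    (hx : x ≠ 0) : e x ≠ 0 := by
  obtain ⟨τ, hadd, -⟩ := he
  have h0 : e 0 = 0 := by simpa using hadd 0 0
  exact fun h => hx (e.injective (h.trans h0.symm))

variable (F K) in
/-- The field automorphism associated to a semilinear map. -/
noncomputable def gammaLToRingAut : gammaLSubgroup F K →* RingAut F :=
  MonoidHom.mk' (fun e => e.2.choose) fun e e' => by
    have h := (e * e').2.choose_spec.2
    ext a
    apply (algebraMap F K).injective
    refine mul_right_cancel₀ (apply_ne_zero_of_mem_gammaLSet (e * e').2 one_ne_zero) ?_
    rw [← h]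
    change e.1 (e'.1 (algebraMap F K a * 1)) =
      algebraMap F K (e.2.choose (e'.2.choose a)) * e.1 (e'.1 1)
    rw [e'.2.choose_spec.2, e.2.choose_spec.2]

theorem gammaLSubgroup_apply_algebraMap_mul (e : gammaLSubgroup F K) (a : F) (x : K) :
    (e : Equiv.Perm K) (algebraMap F K a * x) =
      algebraMap F K (gammaLToRingAut F K e a) * (e : Equiv.Perm K) x :=
  e.2.choose_spec.2 a x

variable (F K) in
/-- Semilinear maps with trivial field automorphism are linear. -/
def gammaLKerToLinearEquiv : (gammaLToRingAut F K).ker →* (K ≃ₗ[F] K) where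
  toFun e :=
    { (e : Equiv.Perm K) with
      map_add' := e.1.2.choose_spec.1
      map_smul' := fun a x => by
        have := gammaLSubgroup_apply_algebraMap_mul e.1 a x
        rw [MonoidHom.mem_ker.1 e.2] at this
        simpa [Algebra.smul_def] using this }
  map_one' := rfl
  map_mul' _ _ := rfl

theorem card_ringAut_dvd [Fintype F] {p m : ℕ} [Fact p.Prime] (hF : Fintype.card F = p ^ m) :
    Nat.card (RingAut F) ∣ m := by
  have := charP_of_card_eq_prime_pow hF
  let _ : Algebra (ZMod p) F := ZMod.algebra F p
  let f : RingAut F →* (F ≃ₐ[ZMod p] F) :=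
    { toFun := fun τ => AlgEquiv.ofRingEquiv (f := τ) fun a =>
        RingHom.congr_fun (Subsingleton.elim ((τ : F →+* F).comp (algebraMap (ZMod p) F))
          (algebraMap (ZMod p) F)) a
      map_one' := rfl
      map_mul' := fun _ _ => rfl }
  have hf : Function.Injective f := fun τ τ' h => RingEquiv.ext fun x => AlgEquiv.congr_fun h x
  have hm : Module.finrank (ZMod p) F = m := by
    have := Module.card_eq_pow_finrank (K := ZMod p) (V := F)
    rw [hF, ZMod.card] at this
    exact (Nat.pow_right_injective (Fact.out : p.Prime).two_le this).symm
  rw [← hm, ← IsGalois.card_aut_eq_finrank]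
  exact Subgroup.card_dvd_of_injective f hf

theorem card_linearEquiv [Fintype F] (h : Module.finrank F K = 2) :
    Nat.card (K ≃ₗ[F] K) =
      (Fintype.card F ^ 2 - 1) * (Fintype.card F ^ 2 - Fintype.card F) := by
  have : FiniteDimensional F K := Module.finite_of_finrank_eq_succ h
  let b := Module.finBasisOfFinrankEq F K h
  rw [← Nat.card_congr (LinearMap.GeneralLinearGroup.generalLinearEquiv F K).toEquiv,
    Nat.card_congr (Units.mapEquiv (LinearMap.toMatrixAlgEquiv b).toMulEquiv).toEquiv]
  exact (Matrix.card_GL_field 2).trans (by simp [Fin.prod_univ_two])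

theorem card_gammaLSubgroup_dvd [Fintype F] (h : Module.finrank F K = 2) {p m : ℕ}
    [Fact p.Prime] (hF : Fintype.card F = p ^ m) : Nat.card (gammaLSubgroup F K) ∣
      m * (Fintype.card F ^ 2 - 1) * (Fintype.card F ^ 2 - Fintype.card F) := by
  have hker : Function.Injective (gammaLKerToLinearEquiv F K) := fun e e' h =>
    Subtype.ext (Subtype.ext (Equiv.ext fun x => LinearEquiv.congr_fun h x))
  rw [← (gammaLToRingAut F K).ker.card_mul_index, Subgroup.index_ker, mul_assoc, mul_comm m,
    ← card_linearEquiv h]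
  exact mul_dvd_mul (Subgroup.card_dvd_of_injective _ hker)
    ((Subgroup.card_subgroup_dvd_card _).trans (card_ringAut_dvd hF))

theorem card_dvd_of_injOn {G G' : Type*} [Group G] [Group G'] {H : Subgroup G} {H' : Subgroup G'}
    {f : G → G'} (hmaps : Set.MapsTo f H H') (hinj : Set.InjOn f H)
    (hmul : ∀ a ∈ H, ∀ b ∈ H, f (a * b) = f a * f b) : Nat.card H ∣ Nat.card H' :=
  Subgroup.card_dvd_of_injective
    (MonoidHom.mk' (fun a => ⟨f a, hmaps a.2⟩) fun a b => Subtype.ext (hmul a a.2 b b.2))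
    fun a b h => Subtype.ext (hinj a.2 b.2 (congrArg Subtype.val h))

end GeneralSemilinearGroup

namespace IsUnitCircle

variable {F K ι : Type*} [Field F] [Field K] [Algebra F K]

theorem of_isPrimitiveRoot [Fintype F] {ζ : K} {n : ℕ} (hζ : IsPrimitiveRoot ζ n)
    (hn : n = Fintype.card F + 1) (h : Module.finrank F K = 2) :
    IsUnitCircle F fun j : Fin n => ζ ^ ((j : ℕ) + 1) where
  injective i j hij := by
    simp only [pow_succ] at hij
    exact Fin.ext (hζ.pow_inj i.2 j.2 (mul_right_cancel₀ (hζ.ne_zero (by lia)) hij))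
  mem_range_iff x := by
    have : NeZero n := ⟨by lia⟩
    have hnorm : Algebra.norm F x = 1 ↔ x ^ n = 1 := by
      rw [← (algebraMap F K).injective.eq_iff, algebraMap_norm_eq_mul h, map_one, hn, pow_succ']
      simp
    rw [hnorm]
    constructor
    · rintro ⟨j, rfl⟩
      rw [pow_right_comm, hζ.pow_eq_one, one_pow]
    · intro hx
      obtain ⟨i, hi, hix⟩ := hζ.eq_pow_of_pow_eq_one (ξ := x / ζ) <| by
        rw [div_pow, hx, hζ.pow_eq_one, div_one]
      exact ⟨⟨i, hi⟩, by simp [pow_succ, hix, hζ.ne_zero (NeZero.ne n)]⟩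
  finrank_eq := h

variable [Finite F] [CharP F 2] [Fintype ι] {u : ι → K}

theorem aut0Set_subset_autSSet (hu : IsUnitCircle F u) :
    aut0Set (checkCode F u : Set (ι → F)) ⊆ autSSet (checkCode F u : Set (ι → F)) := by
  classical
  have := Fintype.ofFinite F
  obtain ⟨⟨n, hpos⟩, -, hn⟩ := FiniteField.card F 2
  obtain rfl | h2 := Nat.eq_or_lt_of_le (Nat.succ_le_of_lt hpos)
  · exact aut0Set_subset_autSSet_of_card_eq_two (by simpa using hn) _
  have h4 : 2 ^ 2 ≤ Fintype.card F := hn ▸ Nat.pow_le_pow_right two_pos h2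
  exact hu.isMDS_checkCode.aut0Set_subset_autSSet (by lia) (by rw [hu.card_eq]; lia)
    (by rw [hu.card_eq]; lia)

theorem exists_injOn_aut0Set_gammaLSet (hu : IsUnitCircle F u) :
    ∃ f : Equiv.Perm (ι → F) → Equiv.Perm K,
      Set.MapsTo f (aut0Set (checkCode F u)) (gammaLSet F K) ∧
      Set.InjOn f (aut0Set (checkCode F u)) ∧
      ∀ e ∈ aut0Set (checkCode F u : Set (ι → F)), ∀ e' ∈ aut0Set (checkCode F u : Set (ι → F)),
        f (e * e') = f e * f e' := by
  have hS := hu.aut0Set_subset_autSSet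
  have h2 := hS.trans (autSSet_subset_autL2Set _)
  choose! f hf using fun (e : Equiv.Perm (ι → F)) he => hu.exists_semiconj (e := e) (h2 he)
  refine ⟨f, fun e he => hu.mem_gammaLSet_of_semiconj (hS he) (hf e he),
    fun e he e' he' h => hu.eq_of_semiconj (h2 he) (h2 he') (hf e he) (h ▸ hf e' he'),
    fun e he e' he' => ?_⟩
  exact semiconj_right_unique hu.linearCombination_surjective
    (hf _ ((aut0Subgroup (checkCode F u : Set (ι → F))).mul_mem he he'))
    ((hf e he).comp_right (hf e' he'))

end IsUnitCircle

/-- Let `m ≥ 1`, `q = 2^m`, and `M_q = (M_q^⊥)^⊥ ⊆ F_q^{q+1}`.  Every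
zero-fixing automorphism of `M_q` is semilinear, i.e.
`Aut0(M_q) = AutL_2(M_q) = AutS(M_q)`; moreover `Aut0(M_q)` is isomorphic to a subgroup of
the general semilinear group `ΓL(2,q)` (of `F_{q²}` as a 2-dimensional `F_q`-space), so
its order divides `m·(q²−1)·(q²−q)`. -/
theorem stmt_11 (m q : ℕ) (hm : 1 ≤ m) (hq : q = 2 ^ m)
    (F K : Type) [Field F] [Field K] [Fintype F] [Fintype K] [Algebra F K]
    (hcF : Fintype.card F = q) (hcK : Fintype.card K = q ^ 2)
    (α : K) (hα : orderOf α = q ^ 2 - 1)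
    (ζ : K) (hζ : ζ = α ^ (q - 1))
    (Mdual : Set (Fin (q + 1) → F))
    (hM : Mdual = {w | ∃ (c : F) (δ : K), ∀ j : Fin (q + 1),
        w j = c + Algebra.trace F K (δ * ζ ^ ((j : ℕ) + 1))}) :
    aut0Set (dualSet Mdual) = autL2Set (dualSet Mdual) ∧
    autL2Set (dualSet Mdual) = autSSet (dualSet Mdual) ∧
    (∃ f : Equiv.Perm (Fin (q + 1) → F) → Equiv.Perm K,
      Set.MapsTo f (aut0Set (dualSet Mdual)) (gammaLSet F K) ∧
      Set.InjOn f (aut0Set (dualSet Mdual)) ∧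
      ∀ e₁ ∈ aut0Set (dualSet Mdual), ∀ e₂ ∈ aut0Set (dualSet Mdual),
        f (e₁ * e₂) = f e₁ * f e₂) ∧
    Nat.card (aut0Set (dualSet Mdual)) ∣ m * (q ^ 2 - 1) * (q ^ 2 - q) := by
  subst hcF
  have := charP_of_card_eq_prime_pow hq
  have hq1 : 1 < Fintype.card F := Fintype.one_lt_card
  have hfin : Module.finrank F K = 2 :=
    Nat.pow_right_injective hq1 (Module.card_eq_pow_finrank.symm.trans hcK)
  have hroot : IsPrimitiveRoot ζ (Fintype.card F + 1) := by
    rw [hζ]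
    have hpos : 0 < Fintype.card F ^ 2 - 1 := Nat.sub_pos_of_lt (Nat.one_lt_pow two_ne_zero hq1)
    exact (hα ▸ IsPrimitiveRoot.orderOf α).pow hpos (by rw [mul_comm, ← Nat.sq_sub_sq, one_pow])
  have hu := IsUnitCircle.of_isPrimitiveRoot hroot rfl hfin
  have : FiniteDimensional F K := hu.finiteDimensional
  have hdual : dualSet Mdual = checkCode F fun j : Fin (Fintype.card F + 1) => ζ ^ ((j : ℕ) + 1) :=
    hM ▸ dualSet_add_trace_eq_checkCode
  rw [hdual]
  have h0S := hu.aut0Set_subset_autSSet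
  obtain ⟨f, hmaps, hinj, hmul⟩ := hu.exists_injOn_aut0Set_gammaLSet
  exact ⟨(h0S.trans (autSSet_subset_autL2Set _)).antisymm (autL2Set_subset_aut0Set _),
    ((autL2Set_subset_aut0Set _).trans h0S).antisymm (autSSet_subset_autL2Set _),
    ⟨f, hmaps, hinj, hmul⟩,
    (card_dvd_of_injOn (H := aut0Subgroup _) (H' := gammaLSubgroup F K) hmaps hinj hmul).trans
      (card_gammaLSubgroup_dvd hfin hq)⟩
end

section
/- Let m ≥ 1 and q = 2^m. For any a, a′, b, b′ ∈ F_q with ab′ + a′b ≠ 0 and any t = 2^s with 0 ≤ s ≤ m−1, define Ψ : F_{q²} → F_{q²} by Ψ(γ_0 + γ_1α) = ((aγ_0 + a′γ_1) + (bγ_0 + b′γ_1)α)^t for γ_0, γ_1 ∈ F_q. Since every nonzero element of F_{q²} is uniquely d·ζ^i with d ∈ F_q^× and i ∈ {1,…,q+1}, write Ψ(ζ^j) = d_j ζ^{i_j}. Then j ↦ i_j is a permutation of {1,…,q+1}, and the map ψ : F_q^{q+1} → F_q^{q+1} sending z = (z_1,…,z_{q+1}) to the word whose i_j-th coordinate equals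 d_j·z_j^t for each j is a semilinear automorphism of M_q, i.e., ψ(M_q) = M_q. Distinct tuples (a, a′, b, b′, t) yield distinct maps ψ; consequently the semilinear automorphism group AutS(M_q) contains a subgroup of order m·(q²−1)·(q²−q) = |ΓL(2,q)|. -/
open Finset

/-!
Write `P_j = ζ ^ j`. These are the elements of norm one of `F_{q²}`, and since squaring is bijective
in characteristic two they represent the points of the projective line of the plane `F_{q²}`. By
nondegeneracy of the trace form, `z ∈ M_q` if and only if `∑ z_j = 0` and `∑ z_j P_j = 0`. If `Ψ` is
semilinear with companion `τ` and `Ψ P_j = d_j P_{i_j}`, the second condition is preserved because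
`∑ (ψ z)_i P_i = Ψ (∑ z_j P_j)`. For the first, `d_j² = N (Ψ P_j)`, and on a plane in characteristic
two the quadratic form `τ⁻¹ ∘ N ∘ Ψ` is `c² N + ℓ²` with `ℓ` linear. Hence `τ⁻¹ d_j = c + ℓ (P_j)`,
and `∑ (ψ z)_i = τ (c ∑ z_j + ℓ (∑ z_j P_j))`.
-/

section Semilinear

variable {F V : Type*} [Semiring F] [AddCommMonoid V] [Module F V]

/-- The additive automorphism `Ψ` of `V` is semilinear with companion automorphism `τ`, that is,
`Ψ` belongs to `ΓL(V)`. Pairs `(τ, Ψ)` are used rather than `V ≃ₛₗ[τ] V` so that `τ` can vary over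
the whole automorphism group of `F`. -/
def IsSemilinear (τ : F ≃+* F) (Ψ : V ≃+ V) : Prop :=
  ∀ (c : F) (x : V), Ψ (c • x) = τ c • Ψ x

theorem IsSemilinear.refl : IsSemilinear (RingEquiv.refl F) (AddEquiv.refl V) :=
  fun _ _ => rfl

theorem IsSemilinear.trans {τ₁ τ₂ : F ≃+* F} {Ψ₁ Ψ₂ : V ≃+ V} (h₁ : IsSemilinear τ₁ Ψ₁)
    (h₂ : IsSemilinear τ₂ Ψ₂) : IsSemilinear (τ₁.trans τ₂) (Ψ₁.trans Ψ₂) := fun c x => by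
  simp [h₁ c x, h₂ (τ₁ c) (Ψ₁ x)]

theorem IsSemilinear.symm {τ : F ≃+* F} {Ψ : V ≃+ V} (h : IsSemilinear τ Ψ) :
    IsSemilinear τ.symm Ψ.symm := fun c x =>
  Ψ.injective <| by simp [h (τ.symm c) (Ψ.symm x)]

theorem isSemilinear_linearEquiv (L : V ≃ₗ[F] V) :
    IsSemilinear (RingEquiv.refl F) L.toAddEquiv :=
  L.map_smul

theorem exists_isSemilinear [Module.Free F V] (τ : F ≃+* F) :
    ∃ Ψ : V ≃+ V, IsSemilinear τ Ψ := by
  let coordinates := (Module.Free.chooseBasis F V).repr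
  refine ⟨coordinates.toAddEquiv.trans
    ((Finsupp.mapRange.addEquiv τ.toAddEquiv).trans coordinates.symm.toAddEquiv), fun c x => ?_⟩
  apply coordinates.injective
  ext i
  simp

theorem IsSemilinear.companion_unique {F V : Type*} [DivisionRing F] [AddCommGroup V] [Module F V]
    [Nontrivial V] {τ τ' : F ≃+* F} {Ψ : V ≃+ V} (h : IsSemilinear τ Ψ)
    (h' : IsSemilinear τ' Ψ) : τ = τ' := by
  obtain ⟨x, hx⟩ := exists_ne (0 : V)
  ext c
  exact smul_left_injective F (Ψ.map_ne_zero_iff.2 hx) ((h c x).symm.trans (h' c x))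

theorem card_isSemilinear (F V : Type*) [Semiring F] [AddCommMonoid V] [Module F V]
    [Module.Free F V] :
    Nat.card {g : (F ≃+* F) × (V ≃+ V) // IsSemilinear g.1 g.2} =
      Nat.card (F ≃+* F) * Nat.card (V ≃ₗ[F] V) := by
  choose T hT using exists_isSemilinear (F := F) (V := V)
  rw [← Nat.card_prod]
  refine Nat.card_congr
    { toFun := fun g => (g.1.1, { g.1.2.trans (T g.1.1).symm with map_smul' := fun c x => ?_ })
      invFun := fun p => ⟨(p.1, p.2.toAddEquiv.trans (T p.1)), fun c x => ?_⟩
      left_inv := fun g => Subtype.ext <| Prod.ext rfl <| AddEquiv.ext fun x => ?_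
      right_inv := fun p => Prod.ext rfl <| LinearEquiv.ext fun x => ?_ }
  · simpa using! (g.2.trans (hT g.1.1).symm) c x
  · exact ((isSemilinear_linearEquiv p.2).trans (hT p.1)) c x
  · exact (T g.1.1).apply_symm_apply _
  · exact (T p.1).symm_apply_apply _

end Semilinear

section Transversal

variable {F V ι : Type*} [Field F] [AddCommGroup V] [Module F V] {P : ι → V}

/-- The vectors `P j` represent the points of the projective space of `V`: each nonzero vector is
a multiple of exactly one of them, by a unique scalar. -/
structure IsProjTransversal (F : Type*) {V ι : Type*} [Field F] [AddCommGroup V] [Module F V]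
    (P : ι → V) : Prop where
  ne_zero : ∀ j, P j ≠ 0
  exists_smul_eq : ∀ x : V, x ≠ 0 → ∃ (c : F) (j : ι), c • P j = x
  index_eq : ∀ {c c' : F} {j j' : ι}, c ≠ 0 → c • P j = c' • P j' → j = j'

/-- The map `e` on words is induced by `Ψ` through its action on the lines spanned by the
points `P j`. A word `z` is identified with the family of vectors `z j • P j`; in the notation
`Ψ (P j) = d j • P (π j)`, the letter of `e z` at `π j` is `d j * τ (z j)`, `τ` the companion
of `Ψ`. -/
def Induces (P : ι → V) (Ψ : V ≃+ V) (e : (ι → F) → ι → F) : Prop :=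
  ∃ π : Equiv.Perm ι, ∀ z j, e z (π j) • P (π j) = Ψ (z j • P j)

theorem Induces.id : Induces P (AddEquiv.refl V) (id : (ι → F) → ι → F) :=
  ⟨1, fun _ _ => rfl⟩

theorem Induces.comp {Ψ₁ Ψ₂ : V ≃+ V} {e₁ e₂ : (ι → F) → ι → F} (h₁ : Induces P Ψ₁ e₁)
    (h₂ : Induces P Ψ₂ e₂) : Induces P (Ψ₂.trans Ψ₁) (e₁ ∘ e₂) := by
  obtain ⟨π₁, h₁⟩ := h₁
  obtain ⟨π₂, h₂⟩ := h₂
  exact ⟨π₁ * π₂, fun z j => by simp [h₁, h₂]⟩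

theorem Induces.symm {Ψ : V ≃+ V} {e : Equiv.Perm (ι → F)} (h : Induces P Ψ e) :
    Induces P Ψ.symm e.symm := by
  obtain ⟨π, h⟩ := h
  exact ⟨π.symm, fun w i => Ψ.injective <| by simp [← h]⟩

theorem Induces.map_sum_smul [Fintype ι] {Ψ : V ≃+ V} {e : (ι → F) → ι → F}
    (h : Induces P Ψ e) (z : ι → F) : Ψ (∑ j, z j • P j) = ∑ i, e z i • P i := by
  obtain ⟨π, h⟩ := h
  calc Ψ (∑ j, z j • P j) = ∑ j, e z (π j) • P (π j) := by simp only [map_sum, h]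
    _ = ∑ i, e z i • P i := Equiv.sum_comp π fun i => e z i • P i

namespace IsProjTransversal

theorem bijective_of_map_eq_smul (hP : IsProjTransversal F P) {τ : F ≃+* F} {Ψ : V ≃+ V}
    (hΨ : IsSemilinear τ Ψ) {d : ι → F} {I : ι → ι} (hI : ∀ j, Ψ (P j) = d j • P (I j)) :
    Function.Bijective I := by
  have hd : ∀ j, d j ≠ 0 := fun j hj => hP.ne_zero j <| by simpa [hj] using hI j
  refine ⟨fun j k hjk => ?_, fun i => ?_⟩
  · have hscaled : Ψ (τ.symm (d k) • P j) = Ψ (τ.symm (d j) • P k) := by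
      rw [hΨ, hΨ, hI, hI, hjk, smul_smul, smul_smul, τ.apply_symm_apply, τ.apply_symm_apply,
        mul_comm]
    exact hP.index_eq (τ.symm.map_ne_zero_iff.2 (hd k)) (Ψ.injective hscaled)
  · obtain ⟨c, j, hj⟩ :=
      hP.exists_smul_eq (Ψ.symm (P i)) (Ψ.symm.map_ne_zero_iff.2 (hP.ne_zero i))
    refine ⟨j, (hP.index_eq (c := 1) (c' := τ c * d j) one_ne_zero ?_).symm⟩
    rw [one_smul, mul_smul, ← hI, ← hΨ, hj, Ψ.apply_symm_apply]

theorem induces_of_map_eq_smul (hP : IsProjTransversal F P) {τ : F ≃+* F} {Ψ : V ≃+ V}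
    (hΨ : IsSemilinear τ Ψ) {d : ι → F} {I : ι → ι} (hI : ∀ j, Ψ (P j) = d j • P (I j))
    {e : (ι → F) → ι → F} (he : ∀ z j, e z (I j) = d j * τ (z j)) : Induces P Ψ e :=
  ⟨Equiv.ofBijective I (hP.bijective_of_map_eq_smul hΨ hI), fun z j => by
    rw [Equiv.ofBijective_apply, he, hΨ, hI, smul_smul, mul_comm]⟩

theorem exists_perm_induces (hP : IsProjTransversal F P) {τ : F ≃+* F} {Ψ : V ≃+ V}
    (hΨ : IsSemilinear τ Ψ) : ∃ e : Equiv.Perm (ι → F), Induces P Ψ e := by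
  choose d I hI using fun j => hP.exists_smul_eq (Ψ (P j)) (Ψ.map_ne_zero_iff.2 (hP.ne_zero j))
  have hd : ∀ j, d j ≠ 0 := fun j hj => hP.ne_zero j <| by simpa [hj] using (hI j).symm
  let π := Equiv.ofBijective I (hP.bijective_of_map_eq_smul hΨ fun j => (hI j).symm)
  refine ⟨(π.arrowCongr τ.toEquiv).trans
    (Equiv.piCongrRight fun i => Equiv.mulLeft₀ (d (π.symm i)) (hd _)), ?_⟩
  refine hP.induces_of_map_eq_smul hΨ (fun j => (hI j).symm) fun z j => ?_
  simp [show I j = π j from rfl]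

theorem induces_unique (hP : IsProjTransversal F P) {Ψ : V ≃+ V} {e e' : (ι → F) → ι → F}
    (h : Induces P Ψ e) (h' : Induces P Ψ e') : e = e' := by
  obtain ⟨π, h⟩ := h
  obtain ⟨π', h'⟩ := h'
  have hπ : ∀ j, π j = π' j := fun j => by
    have hne : e 1 (π j) ≠ 0 := fun h0 => hP.ne_zero j <| by
      simpa [h0] using (h 1 j).symm
    exact hP.index_eq hne ((h 1 j).trans (h' 1 j).symm)
  funext z i
  obtain ⟨j, rfl⟩ := π.surjective i
  refine smul_left_injective F (hP.ne_zero (π j)) ?_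
  simp only [h]
  rw [hπ, h']

theorem inducing_unique [Finite ι] (hP : IsProjTransversal F P) {Ψ Ψ' : V ≃+ V}
    {e : (ι → F) → ι → F} (h : Induces P Ψ e) (h' : Induces P Ψ' e) : Ψ = Ψ' := by
  classical
  have := Fintype.ofFinite ι
  ext x
  obtain rfl | hx := eq_or_ne x 0
  · simp
  · obtain ⟨c, j, rfl⟩ := hP.exists_smul_eq x hx
    have hsum : ∑ i, (Pi.single j c : ι → F) i • P i = c • P j := by
      simp [Pi.single_apply, ite_smul]
    rw [← hsum, h.map_sum_smul, h'.map_sum_smul]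

theorem mem_autSSet (hP : IsProjTransversal F P) {τ : F ≃+* F} {Ψ : V ≃+ V}
    (hΨ : IsSemilinear τ Ψ) {e : Equiv.Perm (ι → F)} (he : Induces P Ψ e) {C : Set (ι → F)}
    (hC : e '' C = C) : e ∈ autSSet C := by
  obtain ⟨π, h⟩ := he
  have hscale : ∀ j, e 1 (π j) • P (π j) = Ψ (P j) := fun j => by simpa using h 1 j
  refine ⟨⟨π, τ, e 1, fun i hi => ?_, fun v i => ?_⟩, hC⟩ <;> obtain ⟨j, rfl⟩ := π.surjective i
  · exact hP.ne_zero j <| by simpa [hi] using (hscale j).symm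
  · refine smul_left_injective F (hP.ne_zero (π j)) ?_
    rw [show π⁻¹ (π j) = j from π.symm_apply_apply j]
    change e v (π j) • P (π j) = (e 1 (π j) * τ (v j)) • P (π j)
    rw [h, hΨ, ← hscale, smul_smul, mul_comm]

end IsProjTransversal

/-- The group of all maps on words induced by the semilinear automorphisms of `V`, a copy of
`ΓL(V)` when the `P j` represent the points of the projective space. -/
def inducedGroup (F : Type*) {V ι : Type*} [Field F] [AddCommGroup V] [Module F V] (P : ι → V) :
    Subgroup (Equiv.Perm (ι → F)) where
  carrier := {e | ∃ (τ : F ≃+* F) (Ψ : V ≃+ V), IsSemilinear τ Ψ ∧ Induces P Ψ e}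
  one_mem' := ⟨_, _, .refl, .id⟩
  mul_mem' := by
    rintro e₁ e₂ ⟨τ₁, Ψ₁, hΨ₁, h₁⟩ ⟨τ₂, Ψ₂, hΨ₂, h₂⟩
    exact ⟨_, _, hΨ₂.trans hΨ₁, h₁.comp h₂⟩
  inv_mem' := by
    rintro e ⟨τ, Ψ, hΨ, h⟩
    exact ⟨_, _, hΨ.symm, h.symm⟩

theorem IsProjTransversal.card_inducedGroup [Finite ι] [Nontrivial V]
    (hP : IsProjTransversal F P) :
    Nat.card (inducedGroup F P) = Nat.card (F ≃+* F) * Nat.card (V ≃ₗ[F] V) := by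
  rw [← card_isSemilinear]
  choose e he using fun g : {g : (F ≃+* F) × (V ≃+ V) // IsSemilinear g.1 g.2} =>
    hP.exists_perm_induces g.2
  refine (Nat.card_eq_of_bijective (fun g => (⟨e g, _, _, g.2, he g⟩ : inducedGroup F P))
    ⟨fun g g' hgg' => ?_, ?_⟩).symm
  · have heq : e g = e g' := congrArg Subtype.val hgg'
    have hΨ : g.1.2 = g'.1.2 := hP.inducing_unique (he g) (heq ▸ he g')
    exact Subtype.ext (Prod.ext (g.2.companion_unique (hΨ ▸ g'.2)) hΨ)
  · rintro ⟨f, τ, Ψ, hΨ, hf⟩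
    exact ⟨⟨(τ, Ψ), hΨ⟩, Subtype.ext (DFunLike.coe_injective (hP.induces_unique (he _) hf))⟩

end Transversal

section QuadraticPlane

variable {F V : Type*} [Field F] [AddCommGroup V] [Module F V]

theorem quadraticForm_apply_eq_of_basis (Q : QuadraticForm F V) (b : Module.Basis (Fin 2) F V)
    (x : V) :
    Q x = b.repr x 0 ^ 2 * Q (b 0) + b.repr x 1 ^ 2 * Q (b 1) +
      b.repr x 0 * b.repr x 1 * QuadraticMap.polar Q (b 0) (b 1) := by
  have hx : b.repr x 0 • b 0 + b.repr x 1 • b 1 = x := by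
    simpa only [Fin.sum_univ_two] using b.sum_repr x
  conv_lhs => rw [← hx, QuadraticMap.map_add Q]
  simp only [QuadraticMap.map_smul, QuadraticMap.polar_smul_left, QuadraticMap.polar_smul_right,
    smul_eq_mul]
  ring

/-- The quadratic form `x ↦ τ⁻¹ (Q (Ψ x))`, for `Ψ` semilinear with companion `τ`. -/
def twistedPullback (Q : QuadraticForm F V) {τ : F ≃+* F} {Ψ : V ≃+ V} (hΨ : IsSemilinear τ Ψ) :
    QuadraticForm F V :=
  have polar_eq : ∀ x y, QuadraticMap.polar (fun x => τ.symm (Q (Ψ x))) x y =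
      τ.symm (QuadraticMap.polar Q (Ψ x) (Ψ y)) := fun x y => by simp [QuadraticMap.polar]
  .ofPolar (fun x => τ.symm (Q (Ψ x)))
    (fun c x => by simp [hΨ c x, QuadraticMap.map_smul])
    (fun x x' y => by simp [polar_eq])
    (fun c x y => by simp [polar_eq, hΨ c x])

theorem map_twistedPullback_apply (Q : QuadraticForm F V) {τ : F ≃+* F} {Ψ : V ≃+ V}
    (hΨ : IsSemilinear τ Ψ) (x : V) : τ (twistedPullback Q hΨ x) = Q (Ψ x) :=
  τ.apply_symm_apply _

variable [CharP F 2] [PerfectRing F 2]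

theorem exists_sq_eq_of_perfectRing_two (c : F) : ∃ r : F, r ^ 2 = c :=
  surjective_frobenius F 2 c

theorem polar_ne_zero_of_anisotropic {Q : QuadraticForm F V} (hQ : Q.Anisotropic) {x y : V}
    (hxy : LinearIndependent F ![x, y]) : QuadraticMap.polar Q x y ≠ 0 := by
  intro hpolar
  obtain ⟨r, hr⟩ := exists_sq_eq_of_perfectRing_two (Q x)
  obtain ⟨s, hs⟩ := exists_sq_eq_of_perfectRing_two (Q y)
  have hisotropic : Q (s • x + r • y) = 0 := by
    rw [QuadraticMap.map_add Q, QuadraticMap.polar_smul_left, QuadraticMap.polar_smul_right, hpolar,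
      QuadraticMap.map_smul, QuadraticMap.map_smul, ← hr, ← hs]
    simp only [smul_eq_mul, mul_zero, add_zero]
    linear_combination s * s * r ^ 2 * CharTwo.two_eq_zero (R := F)
  obtain rfl : r = 0 := (LinearIndependent.pair_iff.1 hxy s r (hQ _ hisotropic)).2
  exact hxy.ne_zero 0 (hQ x (by simpa using hr.symm))

/- In characteristic two a quadratic form on a plane is determined up to squares of linear forms by
its polar form, and all alternating forms on a plane are proportional. -/
theorem exists_eq_sq_mul_add_linear_sq (hV : Module.finrank F V = 2) {Q : QuadraticForm F V}
    (hQ : Q.Anisotropic) (Q' : QuadraticForm F V) :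
    ∃ (c : F) (ℓ : V →ₗ[F] F), ∀ x, Q' x = c ^ 2 * Q x + ℓ x ^ 2 := by
  have : Module.Finite F V := Module.finite_of_finrank_eq_succ hV
  let b := Module.finBasisOfFinrankEq F V hV
  have hpolar : QuadraticMap.polar Q (b 0) (b 1) ≠ 0 :=
    polar_ne_zero_of_anisotropic hQ <| by
      convert b.linearIndependent
      ext i
      fin_cases i <;> rfl
  obtain ⟨c, hc⟩ := exists_sq_eq_of_perfectRing_two
    (QuadraticMap.polar Q' (b 0) (b 1) / QuadraticMap.polar Q (b 0) (b 1))
  obtain ⟨r, hr⟩ := exists_sq_eq_of_perfectRing_two (Q' (b 0) - c ^ 2 * Q (b 0))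
  obtain ⟨s, hs⟩ := exists_sq_eq_of_perfectRing_two (Q' (b 1) - c ^ 2 * Q (b 1))
  refine ⟨c, r • b.coord 0 + s • b.coord 1, fun x => ?_⟩
  have hpolar' : QuadraticMap.polar Q' (b 0) (b 1) = c ^ 2 * QuadraticMap.polar Q (b 0) (b 1) := by
    rw [hc, div_mul_cancel₀ _ hpolar]
  simp only [LinearMap.add_apply, LinearMap.smul_apply, Module.Basis.coord_apply, smul_eq_mul]
  rw [quadraticForm_apply_eq_of_basis Q' b, quadraticForm_apply_eq_of_basis Q b, CharTwo.add_sq,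
    mul_pow, mul_pow, hr, hs, hpolar']
  ring

theorem isProjTransversal_of_range_eq {ι : Type*} {P : ι → V} {Q : QuadraticForm F V}
    (hQ : Q.Anisotropic) (hinj : Function.Injective P) (hrange : Set.range P = {x | Q x = 1}) :
    IsProjTransversal F P := by
  have hQP : ∀ j, Q (P j) = 1 := fun j => hrange.subset ⟨j, rfl⟩
  refine ⟨fun j hj => ?_, fun x hx => ?_, fun {c c' j j'} hc h => ?_⟩
  · simpa [hj] using hQP j
  · obtain ⟨c, hc⟩ := exists_sq_eq_of_perfectRing_two (Q x)
    have hc0 : c ≠ 0 := fun h0 => hx (hQ x (by simp [← hc, h0]))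
    obtain ⟨j, hj⟩ : c⁻¹ • x ∈ Set.range P := by
      rw [hrange, Set.mem_ofPred, QuadraticMap.map_smul, ← hc]
      field_simp
      simp [hc0]
    exact ⟨c, j, by rw [hj, smul_inv_smul₀ hc0]⟩
  · have hsq : c ^ 2 = c' ^ 2 := by
      simpa [QuadraticMap.map_smul, hQP, sq] using congrArg Q h
    obtain rfl : c = c' := frobenius_inj F 2 hsq
    exact hinj (smul_right_injective V hc h)

end QuadraticPlane

section BalancedWords

variable {F V ι : Type*} [Field F] [AddCommGroup V] [Module F V] [Fintype ι] {P : ι → V}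

/-- The words orthogonal to the constant words and to all words `j ↦ f (P j)`, `f` a linear form:
the code `M_q` when the `P j` are the elements of norm one. -/
def balancedWords (F : Type*) {V ι : Type*} [Field F] [AddCommGroup V] [Module F V] [Fintype ι]
    (P : ι → V) : Set (ι → F) :=
  {z | ∑ j, z j = 0 ∧ ∑ j, z j • P j = 0}

variable [CharP F 2] [PerfectRing F 2] {Q : QuadraticForm F V}
  {τ : F ≃+* F} {Ψ : V ≃+ V} {e : (ι → F) → ι → F}

/- The letter `w` of `e z` at the image of `j` satisfies `w² = Q (w • P (π j)) = Q (Ψ (z j • P j))`,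
and `τ⁻¹ ∘ Q ∘ Ψ` is `c² Q` plus the square of a linear form. -/
theorem Induces.exists_sum_eq (hV : Module.finrank F V = 2) (hQ : Q.Anisotropic)
    (hQP : ∀ j, Q (P j) = 1) (hΨ : IsSemilinear τ Ψ) (he : Induces P Ψ e) :
    ∃ (c : F) (ℓ : V →ₗ[F] F), ∀ z, ∑ i, e z i = τ (c * ∑ j, z j + ℓ (∑ j, z j • P j)) := by
  obtain ⟨π, he⟩ := he
  obtain ⟨c, ℓ, hcℓ⟩ := exists_eq_sq_mul_add_linear_sq hV hQ (twistedPullback Q hΨ)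
  have hQ_smul : ∀ (a : F) j, Q (a • P j) = a ^ 2 := fun a j => by
    rw [QuadraticMap.map_smul, hQP, smul_eq_mul, mul_one, sq]
  have hletter : ∀ z j, e z (π j) = τ (c * z j + ℓ (z j • P j)) := fun z j =>
    frobenius_inj F 2 <|
      calc e z (π j) ^ 2 = Q (Ψ (z j • P j)) := by rw [← he, hQ_smul]
        _ = τ (c ^ 2 * z j ^ 2 + ℓ (z j • P j) ^ 2) := by
          rw [← map_twistedPullback_apply Q hΨ, hcℓ, hQ_smul]
        _ = τ (c * z j + ℓ (z j • P j)) ^ 2 := by rw [← map_pow τ, CharTwo.add_sq, mul_pow]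
  refine ⟨c, ℓ, fun z => ?_⟩
  rw [← Equiv.sum_comp π, mul_sum, map_sum ℓ, ← sum_add_distrib, map_sum τ]
  exact sum_congr rfl fun j _ => hletter z j

theorem Induces.mapsTo_balancedWords (hV : Module.finrank F V = 2) (hQ : Q.Anisotropic)
    (hQP : ∀ j, Q (P j) = 1) (hΨ : IsSemilinear τ Ψ) (he : Induces P Ψ e) :
    Set.MapsTo e (balancedWords F P) (balancedWords F P) := by
  obtain ⟨c, ℓ, hsum⟩ := he.exists_sum_eq hV hQ hQP hΨ
  rintro z ⟨hz, hzP⟩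
  exact ⟨by simp [hsum, hz, hzP], by rw [← he.map_sum_smul, hzP, map_zero]⟩

theorem Induces.image_balancedWords (hP : IsProjTransversal F P) (hV : Module.finrank F V = 2)
    (hQ : Q.Anisotropic) (hQP : ∀ j, Q (P j) = 1) (hΨ : IsSemilinear τ Ψ) (he : Induces P Ψ e) :
    e '' balancedWords F P = balancedWords F P := by
  obtain ⟨f, hf⟩ := hP.exists_perm_induces hΨ
  obtain rfl : e = f := hP.induces_unique he hf
  refine (hf.mapsTo_balancedWords hV hQ hQP hΨ).image_subset.antisymm fun z hz => ?_
  exact ⟨f.symm z, hf.symm.mapsTo_balancedWords hV hQ hQP hΨ.symm hz, f.apply_symm_apply z⟩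

end BalancedWords

theorem dualSet_eq_balancedWords {F K ι : Type*} [Field F] [Field K] [Algebra F K]
    [FiniteDimensional F K] [Algebra.IsSeparable F K] [Fintype ι] (P : ι → K) :
    dualSet {w : ι → F | ∃ (c : F) (δ : K), ∀ j, w j = c + Algebra.trace F K (δ * P j)} =
      balancedWords F P := by
  have htrace : ∀ (z : ι → F) (δ : K), ∑ j, Algebra.trace F K (δ * P j) * z j =
      Algebra.trace F K (δ * ∑ j, z j • P j) := fun z δ => by
    simp [mul_sum, mul_comm]
  ext z
  constructor
  · intro h
    refine ⟨by simpa using h 1 ⟨1, 0, by simp⟩,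
      (traceForm_nondegenerate F K).2 _ fun δ => ?_⟩
    rw [Algebra.traceForm_apply, ← htrace]
    exact h (fun j => Algebra.trace F K (δ * P j)) ⟨0, δ, by simp⟩
  · rintro ⟨hz, hzP⟩ w ⟨c, δ, hw⟩
    simp [hw, add_mul, sum_add_distrib, htrace, ← mul_sum, hz, hzP]

section RootsOfUnity

theorem isPrimitiveRoot_pow_sub_one {M : Type*} [CommMonoid M] {α : M} {q : ℕ} (hq : 1 < q)
    (hα : orderOf α = q ^ 2 - 1) : IsPrimitiveRoot (α ^ (q - 1)) (q + 1) := by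
  have hfactor : q ^ 2 - 1 = (q - 1) * (q + 1) := by rw [mul_comm, ← Nat.sq_sub_sq, one_pow]
  have hpos : 0 < q ^ 2 - 1 := hfactor ▸ Nat.mul_pos (Nat.sub_pos_of_lt hq) q.succ_pos
  exact (hα ▸ IsPrimitiveRoot.orderOf α).pow hpos hfactor

variable {K : Type*} [CommRing K] [IsDomain K] {ζ : K} {n : ℕ}

theorem injective_pow_succ_of_isPrimitiveRoot (hζ : IsPrimitiveRoot ζ n) :
    Function.Injective fun j : Fin n => ζ ^ ((j : ℕ) + 1) := fun j k hjk =>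
  Fin.ext <| hζ.pow_inj j.2 k.2 <| mul_right_cancel₀ (hζ.ne_zero j.pos.ne') <| by
    simpa only [pow_succ] using hjk

theorem range_pow_succ_eq_of_isPrimitiveRoot [NeZero n] (hζ : IsPrimitiveRoot ζ n) :
    Set.range (fun j : Fin n => ζ ^ ((j : ℕ) + 1)) = {x | x ^ n = 1} := by
  ext x
  constructor
  · rintro ⟨j, rfl⟩
    rw [Set.mem_ofPred, pow_right_comm, hζ.pow_eq_one, one_pow]
  · intro hx
    obtain ⟨i, hi, hix⟩ := hζ.eq_pow_of_pow_eq_one (ξ := x * ζ ^ (n - 1)) <| by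
      rw [mul_pow, hx, one_mul, pow_right_comm, hζ.pow_eq_one, one_pow]
    refine ⟨⟨i, hi⟩, ?_⟩
    simp only [pow_succ, hix, mul_assoc]
    rw [pow_sub_one_mul (NeZero.ne n), hζ.pow_eq_one, mul_one]

end RootsOfUnity

section NormOne

theorem exists_quadraticForm_eq_norm {F K : Type*} [Field F] [Ring K] [Algebra F K]
    (hK : Module.finrank F K = 2) : ∃ Q : QuadraticForm F K, ∀ x, Q x = Algebra.norm F x := by
  have : Module.Finite F K := Module.finite_of_finrank_eq_succ hK
  let b := Module.finBasisOfFinrankEq F K hK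
  let entry (i j : Fin 2) : K →ₗ[F] F :=
    Matrix.entryLinearMap F F i j ∘ₗ (Algebra.leftMulMatrix b).toLinearMap
  refine ⟨.linMulLin (entry 0 0) (entry 1 1) - .linMulLin (entry 0 1) (entry 1 0), fun x => ?_⟩
  rw [Algebra.norm_eq_matrix_det b, Matrix.det_fin_two]
  rfl

variable {F K : Type*} [Field F] [Field K] [Algebra F K] [Finite K] {ζ : K} {q : ℕ}

theorem norm_eq_one_iff_pow_eq_one (hK : Module.finrank F K = 2) (x : K) :
    Algebra.norm F x = 1 ↔ x ^ (Nat.card F + 1) = 1 := by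
  have : Finite F := Finite.of_injective _ (algebraMap F K).injective
  have hexponent : (Nat.card K - 1) / (Nat.card F - 1) = Nat.card F + 1 := by
    rw [Module.natCard_eq_pow_finrank (K := F) (V := K), hK, ← one_pow 2, Nat.sq_sub_sq, one_pow]
    exact Nat.mul_div_cancel _ (Nat.sub_pos_of_lt Finite.one_lt_card)
  rw [← (algebraMap F K).injective.eq_iff, FiniteField.algebraMap_norm_eq_pow, hexponent, map_one]

theorem exists_anisotropic_range_pow_succ_eq (hK : Module.finrank F K = 2) (hq : Nat.card F = q)
    (hζ : IsPrimitiveRoot ζ (q + 1)) :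
    ∃ Q : QuadraticForm F K, Q.Anisotropic ∧
      Set.range (fun j : Fin (q + 1) => ζ ^ ((j : ℕ) + 1)) = {x | Q x = 1} := by
  have : Module.Finite F K := Module.finite_of_finrank_eq_succ hK
  obtain ⟨Q, hQ⟩ := exists_quadraticForm_eq_norm hK
  refine ⟨Q, fun x hx => Algebra.norm_eq_zero_iff.1 ((hQ x).symm.trans hx), ?_⟩
  simp only [range_pow_succ_eq_of_isPrimitiveRoot hζ, hQ, norm_eq_one_iff_pow_eq_one hK, hq]

variable [CharP F 2]

theorem isProjTransversal_pow_succ (hK : Module.finrank F K = 2) (hq : Nat.card F = q)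
    (hζ : IsPrimitiveRoot ζ (q + 1)) :
    IsProjTransversal F fun j : Fin (q + 1) => ζ ^ ((j : ℕ) + 1) := by
  have : Finite F := Finite.of_injective _ (algebraMap F K).injective
  obtain ⟨Q, hQ, hrange⟩ := exists_anisotropic_range_pow_succ_eq hK hq hζ
  exact isProjTransversal_of_range_eq hQ (injective_pow_succ_of_isPrimitiveRoot hζ) hrange

theorem Induces.image_dualSet_pow_succ (hK : Module.finrank F K = 2) (hq : Nat.card F = q)
    (hζ : IsPrimitiveRoot ζ (q + 1)) {τ : F ≃+* F} {Ψ : K ≃+ K} (hΨ : IsSemilinear τ Ψ)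
    {e : (Fin (q + 1) → F) → Fin (q + 1) → F}
    (he : Induces (fun j : Fin (q + 1) => ζ ^ ((j : ℕ) + 1)) Ψ e) {D : Set (Fin (q + 1) → F)}
    (hD : D = {w | ∃ (c : F) (δ : K), ∀ j : Fin (q + 1),
      w j = c + Algebra.trace F K (δ * ζ ^ ((j : ℕ) + 1))}) :
    e '' dualSet D = dualSet D := by
  have : Finite F := Finite.of_injective _ (algebraMap F K).injective
  obtain ⟨Q, hQ, hrange⟩ := exists_anisotropic_range_pow_succ_eq hK hq hζ
  rw [hD, dualSet_eq_balancedWords]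
  exact he.image_balancedWords (isProjTransversal_pow_succ hK hq hζ) hK hQ
    (fun j => hrange.subset ⟨j, rfl⟩) hΨ

end NormOne

section FrobeniusTwist

theorem bijective_iterateFrobeniusEquiv (k : Type*) [Field k] [Finite k] (p m : ℕ)
    [Fact p.Prime] [CharP k p] (hk : Nat.card k = p ^ m) :
    Function.Bijective (fun s : Fin m => iterateFrobeniusEquiv k p s) := by
  let := ZMod.algebra k p
  obtain rfl : m = Module.finrank (ZMod p) k :=
    Nat.pow_right_injective (Fact.out : p.Prime).two_le <| by
      simpa [hk] using Module.natCard_eq_pow_finrank (K := ZMod p) (V := k)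
  let toAlg : (k ≃+* k) ≃ (k ≃ₐ[ZMod p] k) :=
    { toFun := fun τ => AlgEquiv.ofRingEquiv (f := τ) fun c => by
        exact RingHom.congr_fun (Subsingleton.elim
          ((τ : k →+* k).comp (algebraMap (ZMod p) k)) (algebraMap (ZMod p) k)) c
      invFun := AlgEquiv.toRingEquiv }
  have hpow : (fun s : Fin (Module.finrank (ZMod p) k) =>
      FiniteField.frobeniusAlgEquivOfAlgebraic (ZMod p) k ^ (s : ℕ)) =
      toAlg ∘ fun s : Fin _ => iterateFrobeniusEquiv k p s := by
    ext s x
    rw [AlgEquiv.coe_pow, FiniteField.coe_frobeniusAlgEquivOfAlgebraic_iterate, ZMod.card]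
    rfl
  exact (toAlg.bijective.of_comp_iff' _).1
    (hpow ▸ FiniteField.bijective_frobeniusAlgEquivOfAlgebraic_pow (ZMod p) k)

variable {F K ι : Type*} [Field F] [Field K] [Algebra F K] [Fintype ι] [DecidableEq ι]
  (p : ℕ) [ExpChar K p] [PerfectRing K p] (b : Module.Basis ι F K) (A : GL ι F) (s : ℕ)

/-- The semilinear automorphism `x ↦ (A x) ^ (p ^ s)` of `K`, where the matrix `A` acts on
coordinates with respect to `b`. -/
noncomputable def frobeniusTwist : K ≃+ K :=
  (LinearMap.GeneralLinearGroup.toLinearEquiv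
    (Matrix.GeneralLinearGroup.toLin' b A)).toAddEquiv.trans
    (iterateFrobeniusEquiv K p s).toAddEquiv

theorem frobeniusTwist_apply (x : K) :
    frobeniusTwist p b A s x = (∑ i, (A.1.mulVec (b.repr x)) i • b i) ^ p ^ s := by
  rw [← Fintype.linearCombination_apply, ← Matrix.GeneralLinearGroup.toLin'_apply]
  rfl

theorem matrix_eq_of_frobeniusTwist_eq {A' : GL ι F}
    (h : frobeniusTwist p b A s = frobeniusTwist p b A' s) : A = A' := by
  refine (Matrix.GeneralLinearGroup.toLin' b).injective <|
    (LinearMap.GeneralLinearGroup.generalLinearEquiv F K).injective <| LinearEquiv.ext fun x => ?_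
  exact (iterateFrobeniusEquiv K p s).injective (DFunLike.congr_fun h x)

theorem isSemilinear_frobeniusTwist [ExpChar F p] [PerfectRing F p] :
    IsSemilinear (iterateFrobeniusEquiv F p s) (frobeniusTwist p b A s) := fun c x => by
  simp only [frobeniusTwist_apply, map_smul, Finsupp.coe_smul, Matrix.mulVec_smul, Pi.smul_apply,
    smul_assoc, ← smul_sum, smul_pow, iterateFrobeniusEquiv_def]

theorem exponent_eq_and_matrix_eq_of_frobeniusTwist_eq (p : ℕ) [Fact p.Prime] [CharP F p]
    [Finite F] [CharP K p] [PerfectRing K p] (b : Module.Basis ι F K) {A A' : GL ι F} {s s' m : ℕ}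
    (hF : Nat.card F = p ^ m) (hs : s < m) (hs' : s' < m)
    (h : frobeniusTwist p b A s = frobeniusTwist p b A' s') : s = s' ∧ A = A' := by
  have hcompanion : iterateFrobeniusEquiv F p s = iterateFrobeniusEquiv F p s' :=
    (isSemilinear_frobeniusTwist p b A s).companion_unique
      (h ▸ isSemilinear_frobeniusTwist p b A' s')
  obtain rfl : s = s' := congrArg Fin.val <|
    (bijective_iterateFrobeniusEquiv F p m hF).injective (a₁ := ⟨s, hs⟩) (a₂ := ⟨s', hs'⟩)
      hcompanion
  exact ⟨rfl, matrix_eq_of_frobeniusTwist_eq p b A s h⟩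

theorem IsProjTransversal.exists_induces_frobeniusTwist {κ : Type*} [CharP F 2] [PerfectRing F 2]
    [CharP K 2] [PerfectRing K 2] {P : κ → K} (hP : IsProjTransversal F P)
    {β : Module.Basis (Fin 2) F K} {α : K} {g₀ g₁ : K → F} (hβ : ⇑β = ![1, α])
    (hrepr : ∀ x, ⇑(β.repr x) = ![g₀ x, g₁ x]) {a a' b b' : F} (hdet : a * b' + a' * b ≠ 0)
    {s : ℕ} {d : κ → F} {I : κ → κ}
    (hI : ∀ j, (algebraMap F K (a * g₀ (P j) + a' * g₁ (P j)) +
      algebraMap F K (b * g₀ (P j) + b' * g₁ (P j)) * α) ^ 2 ^ s = algebraMap F K (d j) * P (I j)) :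
    ∃ A : GL (Fin 2) F, A.1 = !![a, a'; b, b'] ∧ Function.Bijective I ∧
      ∀ e : (κ → F) → κ → F, (∀ z j, e z (I j) = d j * z j ^ 2 ^ s) →
        Induces P (frobeniusTwist 2 β A s) e := by
  let A : GL (Fin 2) F := .mkOfDetNeZero !![a, a'; b, b'] <| by
    rwa [Matrix.det_fin_two_of, CharTwo.sub_eq_add]
  have hA : ∀ j, frobeniusTwist 2 β A s (P j) = d j • P (I j) := fun j => by
    rw [Algebra.smul_def, ← hI]
    simp [A, frobeniusTwist_apply, hβ, hrepr, Fin.sum_univ_two, Algebra.smul_def, mul_comm]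
  have hsemilinear := isSemilinear_frobeniusTwist 2 β A s
  exact ⟨A, rfl, hP.bijective_of_map_eq_smul hsemilinear hA,
    fun e he => hP.induces_of_map_eq_smul hsemilinear hA he⟩

end FrobeniusTwist

section Dimension

theorem exists_basis_of_unique_coordinates {F V : Type*} [DivisionRing F] [AddCommGroup V]
    [Module F V] {v w : V} {g₀ g₁ : V → F} (hspan : ∀ x, g₀ x • v + g₁ x • w = x)
    (hunique : ∀ x c₀ c₁, c₀ • v + c₁ • w = x → c₀ = g₀ x ∧ c₁ = g₁ x) :
    ∃ b : Module.Basis (Fin 2) F V, ⇑b = ![v, w] ∧ ∀ x, ⇑(b.repr x) = ![g₀ x, g₁ x] := by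
  let b := Module.Basis.mk (v := ![v, w])
    (LinearIndependent.pair_iff.2 fun c₀ c₁ h => by
      have h0 := hunique 0 0 0 (by simp)
      have hc := hunique 0 c₀ c₁ h
      exact ⟨hc.1.trans h0.1.symm, hc.2.trans h0.2.symm⟩)
    (fun x _ => by
      rw [Matrix.range_cons_cons_empty _ _ ![], Submodule.mem_span_pair]
      exact ⟨_, _, hspan x⟩)
  have hb : ⇑b = ![v, w] := Module.Basis.coe_mk _ _
  refine ⟨b, hb, fun x => ?_⟩
  have hx := hunique x (b.repr x 0) (b.repr x 1) <| by
    simpa [Fin.sum_univ_two, hb] using b.sum_repr x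
  ext i
  fin_cases i
  exacts [hx.1, hx.2]

theorem card_linearEquiv_of_finrank_eq_two (F V : Type*) [Field F] [Finite F] [AddCommGroup V]
    [Module F V] (hV : Module.finrank F V = 2) :
    Nat.card (V ≃ₗ[F] V) = (Nat.card F ^ 2 - 1) * (Nat.card F ^ 2 - Nat.card F) := by
  have := Fintype.ofFinite F
  have : Module.Finite F V := Module.finite_of_finrank_eq_succ hV
  have e := (Matrix.GeneralLinearGroup.toLin' (Module.finBasisOfFinrankEq F V hV)).trans
    (LinearMap.GeneralLinearGroup.generalLinearEquiv F V)
  rw [← Nat.card_congr e.toEquiv, Matrix.card_GL_field, Fin.prod_univ_two]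
  simp

end Dimension

/-- Let `m ≥ 1`, `q = 2^m`, `K = F_{q²}` with basis `{1, α}` over `F = F_q`
(with coordinate functions `g0`, `g1`), `ζ = α^{q−1}`, and `M_q = (M_q^⊥)^⊥`.  For
`a, a′, b, b′ ∈ F` with `ab′ + a′b ≠ 0` and `t = 2^s`, `0 ≤ s ≤ m−1`, define
`Ψ(γ₀+γ₁α) = ((aγ₀+a′γ₁) + (bγ₀+b′γ₁)α)^t`, and write `Ψ(ζ^j) = d_j ζ^{i_j}` with
`d_j ∈ F^×`.  Then `j ↦ i_j` is a permutation, and the map `ψ` sending `z` to the word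
whose `i_j`-th coordinate is `d_j·z_j^t` satisfies `ψ(M_q) = M_q`, i.e. it is a semilinear
automorphism of `M_q`.  Distinct tuples `(a, a′, b, b′, t)` yield distinct maps `ψ`;
consequently `AutS(M_q)` contains a subgroup of order `m·(q²−1)·(q²−q) = |ΓL(2,q)|`. -/
theorem stmt_12 (m q : ℕ) (hm : 1 ≤ m) (hq : q = 2 ^ m)
    (F K : Type) [Field F] [Field K] [Fintype F] [Fintype K] [Algebra F K]
    (hcF : Fintype.card F = q) (hcK : Fintype.card K = q ^ 2)
    (α : K) (hα : orderOf α = q ^ 2 - 1)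
    (ζ : K) (hζ : ζ = α ^ (q - 1))
    (Mdual : Set (Fin (q + 1) → F))
    (hM : Mdual = {w | ∃ (c : F) (δ : K), ∀ j : Fin (q + 1),
        w j = c + Algebra.trace F K (δ * ζ ^ ((j : ℕ) + 1))})
    (g0 g1 : K → F)
    (hcoord : ∀ x : K, algebraMap F K (g0 x) + algebraMap F K (g1 x) * α = x)
    (huniq : ∀ (x : K) (γ0 γ1 : F),
      algebraMap F K γ0 + algebraMap F K γ1 * α = x → γ0 = g0 x ∧ γ1 = g1 x) :
    (∀ (a a' b b' : F) (s : ℕ), s ≤ m - 1 → a * b' + a' * b ≠ 0 →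
      ∀ (d : Fin (q + 1) → F) (I : Fin (q + 1) → Fin (q + 1)),
        (∀ j, d j ≠ 0) →
        (∀ j : Fin (q + 1),
          (algebraMap F K (a * g0 (ζ ^ ((j : ℕ) + 1)) + a' * g1 (ζ ^ ((j : ℕ) + 1)))
            + algebraMap F K (b * g0 (ζ ^ ((j : ℕ) + 1)) + b' * g1 (ζ ^ ((j : ℕ) + 1))) * α)
              ^ (2 ^ s)
            = algebraMap F K (d j) * ζ ^ ((I j : ℕ) + 1)) →
        Function.Bijective I ∧
        ∀ ψ : (Fin (q + 1) → F) → (Fin (q + 1) → F),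
          (∀ (z : Fin (q + 1) → F) (j : Fin (q + 1)), ψ z (I j) = d j * z j ^ (2 ^ s)) →
          ψ '' dualSet Mdual = dualSet Mdual) ∧
    (∀ (a₁ a₁' b₁ b₁' : F) (s₁ : ℕ) (a₂ a₂' b₂ b₂' : F) (s₂ : ℕ),
      s₁ ≤ m - 1 → a₁ * b₁' + a₁' * b₁ ≠ 0 →
      s₂ ≤ m - 1 → a₂ * b₂' + a₂' * b₂ ≠ 0 →
      ∀ (d₁ : Fin (q + 1) → F) (I₁ : Fin (q + 1) → Fin (q + 1))
        (d₂ : Fin (q + 1) → F) (I₂ : Fin (q + 1) → Fin (q + 1)),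
        (∀ j, d₁ j ≠ 0) → (∀ j, d₂ j ≠ 0) →
        (∀ j : Fin (q + 1),
          (algebraMap F K (a₁ * g0 (ζ ^ ((j : ℕ) + 1)) + a₁' * g1 (ζ ^ ((j : ℕ) + 1)))
            + algebraMap F K (b₁ * g0 (ζ ^ ((j : ℕ) + 1)) + b₁' * g1 (ζ ^ ((j : ℕ) + 1))) * α)
              ^ (2 ^ s₁)
            = algebraMap F K (d₁ j) * ζ ^ ((I₁ j : ℕ) + 1)) →
        (∀ j : Fin (q + 1),
          (algebraMap F K (a₂ * g0 (ζ ^ ((j : ℕ) + 1)) + a₂' * g1 (ζ ^ ((j : ℕ) + 1)))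
            + algebraMap F K (b₂ * g0 (ζ ^ ((j : ℕ) + 1)) + b₂' * g1 (ζ ^ ((j : ℕ) + 1))) * α)
              ^ (2 ^ s₂)
            = algebraMap F K (d₂ j) * ζ ^ ((I₂ j : ℕ) + 1)) →
        ∀ (ψ₁ ψ₂ : (Fin (q + 1) → F) → (Fin (q + 1) → F)),
          (∀ z j, ψ₁ z (I₁ j) = d₁ j * z j ^ (2 ^ s₁)) →
          (∀ z j, ψ₂ z (I₂ j) = d₂ j * z j ^ (2 ^ s₂)) →
          (a₁, a₁', b₁, b₁', 2 ^ s₁) ≠ (a₂, a₂', b₂, b₂', 2 ^ s₂) →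
          ψ₁ ≠ ψ₂) ∧
    (∃ G : Subgroup (Equiv.Perm (Fin (q + 1) → F)),
      (G : Set (Equiv.Perm (Fin (q + 1) → F))) ⊆ autSSet (dualSet Mdual) ∧
      Nat.card G = m * (q ^ 2 - 1) * (q ^ 2 - q)) := by
  have hF : Nat.card F = q := Nat.card_eq_fintype_card.trans hcF
  have : CharP F 2 := charP_of_card_eq_prime_pow (hcF.trans hq)
  have : CharP K 2 := charP_of_injective_algebraMap (algebraMap F K).injective 2
  obtain ⟨β, hβ, hrepr⟩ := exists_basis_of_unique_coordinates (v := (1 : K)) (w := α)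
    (fun x => by simpa [Algebra.smul_def] using hcoord x)
    (fun x c₀ c₁ h => huniq x c₀ c₁ (by simpa [Algebra.smul_def] using h))
  have hK : Module.finrank F K = 2 := by simpa using Module.finrank_eq_card_basis β
  have hprim : IsPrimitiveRoot ζ (q + 1) :=
    hζ ▸ isPrimitiveRoot_pow_sub_one (hcF ▸ Fintype.one_lt_card) hα
  have hP := isProjTransversal_pow_succ hK hF hprim
  refine ⟨fun a a' b b' s _ hdet d I _ hI => ?_, ?_,
    inducedGroup F fun j : Fin (q + 1) => ζ ^ ((j : ℕ) + 1), ?_, ?_⟩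
  · obtain ⟨A, -, hbij, hind⟩ := hP.exists_induces_frobeniusTwist hβ hrepr hdet hI
    exact ⟨hbij, fun ψ hψ => (hind ψ hψ).image_dualSet_pow_succ hK hF hprim
      (isSemilinear_frobeniusTwist 2 β A s) hM⟩
  · intro a₁ a₁' b₁ b₁' s₁ a₂ a₂' b₂ b₂' s₂ hs₁ hdet₁ hs₂ hdet₂ d₁ I₁ d₂ I₂ _ _ hI₁ hI₂
      ψ₁ ψ₂ hψ₁ hψ₂ hne hψ
    obtain ⟨A₁, hA₁, -, hind₁⟩ := hP.exists_induces_frobeniusTwist hβ hrepr hdet₁ hI₁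
    obtain ⟨A₂, hA₂, -, hind₂⟩ := hP.exists_induces_frobeniusTwist hβ hrepr hdet₂ hI₂
    obtain ⟨rfl, rfl⟩ := exponent_eq_and_matrix_eq_of_frobeniusTwist_eq 2 β (hF.trans hq)
      (by lia) (by lia) (hP.inducing_unique (hind₁ ψ₁ hψ₁) (hψ ▸ hind₂ ψ₂ hψ₂))
    exact hne (by simpa [and_assoc] using hA₁.symm.trans hA₂)
  · rintro e ⟨τ, Ψ, hΨ, he⟩
    exact hP.mem_autSSet hΨ he (he.image_dualSet_pow_succ hK hF hprim hΨ hM)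
  · rw [hP.card_inducedGroup, card_linearEquiv_of_finrank_eq_two F K hK, hF, mul_assoc,
      ← Nat.card_eq_of_bijective _ (bijective_iterateFrobeniusEquiv F 2 m (hF.trans hq)),
      Nat.card_fin]
end
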